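/- arXiv:1405.1575 — 2 statements merged into one kernel-verified Lean document; each statement's English description precedes it below -/
import Mathlib

section
/- Let n > 2 and p > 2. Up to equivalence, there are exactly 6 maximal elements among the linear subspaces of n×p matrices over F2 with upper rank 2, namely: R(2,0), R(0,2), R(1,1), and the embeddings into the top-left 3×3 corner (with all other entries zero) of J3(F2), of Mata3(F2), and of V3(F2). -/
/-!
*Every space `V` of upper rank `2` fits into one of the six.* Normalize a member of rank `2` to
`E = diag (1, 1, 0, …)`.

Suppose first that some member `N` has an entry `N i j ≠ 0` with both indices outside the first
two. The minors of `N` and of `N + E` bordering that entry say that its Schur complement `T` in `N`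
and `T + E` both have rank at most `1`. So `T` is, on the first two indices, a `2 × 2` idempotent of
rank one, and vanishes elsewhere; hence `V` contains a copy of the four diagonal `3 × 3` matrices
of trace zero. That set is *rigid*: looking at `3 × 3` minors, a space of rank at most `2`
containing it lives in the same `3 × 3` corner. The remaining `3 × 3` problem gives `J3` or `V3`.

Otherwise all members vanish outside the first two rows and columns. Write `b` for the first two
entries of a later row and `c` for the first two entries of a later column; these are pairs of
linear forms on `V`. The minors bordering the upper left `2 × 2` block, for `N` and for `N + E`,
give a cubic identity and `b₀ c₀ + b₁ c₁ = 0`. If all `b` or all `c` vanish, `V` fits into `R(2,0)`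
or `R(0,2)`. Over `F2`, a product of two nonzero linear forms is not identically zero, and
a product of three is only if they add up to zero. This leaves two possibilities: either `b` and
`c` are multiples of constant vectors, which gives `R(1,1)` or `J3`, or `c` is `b` with its
components exchanged, which gives `Mata3` or `V3`.

A maximal space that fits into a space of upper rank `2` is equivalent to it.

*The six spaces are maximal.* For the `R(s,t)`, a matrix outside the space can be completed by a
member to one with a nonzero `3 × 3` minor. For the embeddings, each of the three `3 × 3` spaces
contains, up to a right factor, a rigid set, so that a larger space of upper rank `2` stays in the
corner, where the claim is about singular `3 × 3` matrices.

*They are pairwise inequivalent.* The dimension of the space, and the dimension of the space of all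
`u` such that every matrix with columns multiples of `u` belongs to it, are invariants that separate
the six.
-/

open Matrix

/-- Two linear subspaces of `n × p` matrices over `K` are *equivalent* when one is obtained
from the other by multiplying on the left and on the right by fixed invertible matrices. -/
def MatEquiv (K : Type*) [Field K] {n p : ℕ}
    (V₁ V₂ : Submodule K (Matrix (Fin n) (Fin p) K)) : Prop :=
  ∃ (P : Matrix (Fin n) (Fin n) K) (Q : Matrix (Fin p) (Fin p) K),
    IsUnit P ∧ IsUnit Q ∧
      (V₂ : Set (Matrix (Fin n) (Fin p) K)) =
        (fun M => P * M * Q) '' (V₁ : Set (Matrix (Fin n) (Fin p) K))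

/-- A linear subspace of matrices is *reduced* when no nonzero vector is annihilated by every
matrix of the space, and the column spaces of the matrices of the space together span the
whole target space. -/
def Reduced (K : Type*) [Field K] {n p : ℕ}
    (V : Submodule K (Matrix (Fin n) (Fin p) K)) : Prop :=
  (∀ x : Fin p → K, (∀ M ∈ V, M.mulVec x = 0) → x = 0) ∧
  Submodule.span K {y : Fin n → K | ∃ M ∈ V, ∃ x : Fin p → K, M.mulVec x = y} = ⊤

/-- The *upper rank* of a linear subspace of matrices: the maximal rank of a matrix in it. -/
noncomputable def urk {K : Type*} [Field K] {n p : ℕ}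
    (V : Submodule K (Matrix (Fin n) (Fin p) K)) : ℕ :=
  sSup (Matrix.rank '' (V : Set (Matrix (Fin n) (Fin p) K)))

/-- The matrix obtained by deleting the last column. -/
def dropCol {K : Type*} [Field K] {n p : ℕ} (M : Matrix (Fin n) (Fin p) K) :
    Matrix (Fin n) (Fin (p - 1)) K :=
  M.submatrix id (Fin.castLE (Nat.sub_le p 1))

/-- The matrix obtained by deleting the last row. -/
def dropRow {K : Type*} [Field K] {n p : ℕ} (M : Matrix (Fin n) (Fin p) K) :
    Matrix (Fin (n - 1)) (Fin p) K :=
  M.submatrix (Fin.castLE (Nat.sub_le n 1)) id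

/-- A linear subspace of matrices (of upper rank `r = urk V`) is *semi-primitive* when it is
reduced and it is not equivalent to a subspace `T` such that the space obtained by deleting
the last column of each matrix of `T` has upper rank at most `r - 1`. -/
def SemiPrimitive (K : Type*) [Field K] {n p : ℕ}
    (V : Submodule K (Matrix (Fin n) (Fin p) K)) : Prop :=
  Reduced K V ∧
    ¬ ∃ T : Submodule K (Matrix (Fin n) (Fin p) K),
        MatEquiv K V T ∧ ∀ M ∈ T, (dropCol M).rank ≤ urk V - 1

/-- A linear subspace of matrices (of upper rank `r = urk V`) is *primitive* when it is
semi-primitive and it is not equivalent to a subspace `T` such that the space obtained by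
deleting the last row of each matrix of `T` has upper rank at most `r - 1`. -/
def Primitive (K : Type*) [Field K] {n p : ℕ}
    (V : Submodule K (Matrix (Fin n) (Fin p) K)) : Prop :=
  SemiPrimitive K V ∧
    ¬ ∃ T : Submodule K (Matrix (Fin n) (Fin p) K),
        MatEquiv K V T ∧ ∀ M ∈ T, (dropRow M).rank ≤ urk V - 1

/-- `R(s, t)`: the space of `n × p` matrices whose `(i, j)` entry vanishes whenever `i ≥ s`
and `j ≥ t` (rows and columns being indexed from `0`). -/
def Rst (K : Type*) [Field K] (n p s t : ℕ) : Submodule K (Matrix (Fin n) (Fin p) K) where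
  carrier := {M | ∀ (i : Fin n) (j : Fin p), s ≤ (i : ℕ) → t ≤ (j : ℕ) → M i j = 0}
  add_mem' := by
    intro M N hM hN i j hi hj
    simp [Matrix.add_apply, hM i j hi hj, hN i j hi hj]
  zero_mem' := fun i j _ _ => rfl
  smul_mem' := by
    intro c M hM i j hi hj
    simp [Matrix.smul_apply, hM i j hi hj]

/-- `J3(F2)`: the space of upper-triangular `3 × 3` matrices over `F2` with trace zero. -/
def J3 : Submodule (ZMod 2) (Matrix (Fin 3) (Fin 3) (ZMod 2)) where
  carrier := {M | M.trace = 0 ∧ ∀ i j : Fin 3, j < i → M i j = 0}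
  add_mem' := by
    rintro M N ⟨hM1, hM2⟩ ⟨hN1, hN2⟩
    refine ⟨by simp [Matrix.trace_add, hM1, hN1], ?_⟩
    intro i j h
    simp [Matrix.add_apply, hM2 i j h, hN2 i j h]
  zero_mem' := by
    refine ⟨by simp, ?_⟩
    intro i j h
    simp
  smul_mem' := by
    rintro c M ⟨hM1, hM2⟩
    refine ⟨by simp [Matrix.trace_smul, hM1], ?_⟩
    intro i j h
    simp [Matrix.smul_apply, hM2 i j h]

/-- `Mata3(F2)`: the space of alternating (skew-symmetric with zero diagonal) `3 × 3`
matrices over `F2`. -/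
def Mata3 : Submodule (ZMod 2) (Matrix (Fin 3) (Fin 3) (ZMod 2)) where
  carrier := {M | Mᵀ = -M ∧ ∀ i : Fin 3, M i i = 0}
  add_mem' := by
    rintro M N ⟨hM1, hM2⟩ ⟨hN1, hN2⟩
    refine ⟨by rw [Matrix.transpose_add, hM1, hN1]; abel, fun i => by
      simp [Matrix.add_apply, hM2 i, hN2 i]⟩
  zero_mem' := ⟨by simp, fun i => rfl⟩
  smul_mem' := by
    rintro c M ⟨hM1, hM2⟩
    exact ⟨by rw [Matrix.transpose_smul, hM1, smul_neg], fun i => by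
      simp [Matrix.smul_apply, hM2 i]⟩

/-- `V3(F2)`: the `3 × 3` matrices over `F2` with zero diagonal satisfying
`M 0 1 + M 1 2 + M 2 0 = 0` and `M 2 1 + M 1 0 + M 0 2 = 0`. -/
def V3 : Submodule (ZMod 2) (Matrix (Fin 3) (Fin 3) (ZMod 2)) where
  carrier := {M | (∀ i : Fin 3, M i i = 0) ∧
    M 0 1 + M 1 2 + M 2 0 = 0 ∧ M 2 1 + M 1 0 + M 0 2 = 0}
  add_mem' := by
    rintro M N ⟨hM1, hM2, hM3⟩ ⟨hN1, hN2, hN3⟩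
    refine ⟨fun i => by simp [Matrix.add_apply, hM1 i, hN1 i], ?_, ?_⟩
    · simp only [Matrix.add_apply]
      linear_combination hM2 + hN2
    · simp only [Matrix.add_apply]
      linear_combination hM3 + hN3
  zero_mem' := by
    refine ⟨fun i => rfl, ?_, ?_⟩ <;> simp
  smul_mem' := by
    rintro c M ⟨hM1, hM2, hM3⟩
    refine ⟨fun i => by simp [Matrix.smul_apply, hM1 i], ?_, ?_⟩
    · simp only [Matrix.smul_apply, smul_eq_mul]
      linear_combination c * hM2
    · simp only [Matrix.smul_apply, smul_eq_mul]
      linear_combination c * hM3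

/-- The embedding of a space `W` of `3 × 3` matrices into the top-left corner of the
`n × p` matrices (all other entries being zero). -/
def embed (n p : ℕ) (hn : 3 ≤ n) (hp : 3 ≤ p)
    (W : Submodule (ZMod 2) (Matrix (Fin 3) (Fin 3) (ZMod 2))) :
    Submodule (ZMod 2) (Matrix (Fin n) (Fin p) (ZMod 2)) where
  carrier := {M | M.submatrix (Fin.castLE hn) (Fin.castLE hp) ∈ W ∧
    ∀ (i : Fin n) (j : Fin p), 3 ≤ (i : ℕ) ∨ 3 ≤ (j : ℕ) → M i j = 0}
  add_mem' := by
    rintro M N ⟨hM1, hM2⟩ ⟨hN1, hN2⟩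
    exact ⟨W.add_mem hM1 hN1, fun i j h => by simp [Matrix.add_apply, hM2 i j h, hN2 i j h]⟩
  zero_mem' := ⟨W.zero_mem, fun i j _ => rfl⟩
  smul_mem' := by
    rintro c M ⟨hM1, hM2⟩
    exact ⟨W.smul_mem c hM1, fun i j h => by simp [Matrix.smul_apply, hM2 i j h]⟩

/-- A maximal element among the linear subspaces of matrices with upper rank `2`. -/
def IsMaxUrk2 {n p : ℕ} (V : Submodule (ZMod 2) (Matrix (Fin n) (Fin p) (ZMod 2))) : Prop :=
  urk V = 2 ∧ ∀ W : Submodule (ZMod 2) (Matrix (Fin n) (Fin p) (ZMod 2)),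
    urk W = 2 → V ≤ W → W = V

/-- The list of the six maximal spaces with upper rank `2`. -/
def maxList (n p : ℕ) (hn : 2 < n) (hp : 2 < p) :
    List (Submodule (ZMod 2) (Matrix (Fin n) (Fin p) (ZMod 2))) :=
  [Rst (ZMod 2) n p 2 0, Rst (ZMod 2) n p 0 2, Rst (ZMod 2) n p 1 1,
   embed n p hn hp J3, embed n p hn hp Mata3, embed n p hn hp V3]

/-! ### Linear forms over the field with two elements -/

theorem eq_one_of_ne_zero {x : ZMod 2} (hx : x ≠ 0) : x = 1 := by
  revert x; decide

theorem mul_self_zmod_two (x : ZMod 2) : x * x = x := by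
  revert x; decide

section LinearForms

open Module

variable {K E : Type*} [AddCommGroup E]

theorem dual_eq_zero_or_eq_zero_of_mul_eq_zero [Field K] [Module K E] {f g : Dual K E}
    (h : ∀ v, f v * g v = 0) : f = 0 ∨ g = 0 := by
  by_contra! hfg
  obtain ⟨⟨u, hu⟩, v, hv⟩ := And.imp DFunLike.ne_iff.1 DFunLike.ne_iff.1 hfg
  have hgu : g u = 0 := (mul_eq_zero.1 (h u)).resolve_left hu
  have hfv : f v = 0 := (mul_eq_zero.1 (h v)).resolve_right hv
  have huv := h (u + v)
  rw [map_add, map_add, hgu, hfv, add_zero, zero_add] at huv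
  exact mul_ne_zero hu hv huv

theorem dual_exists_mul_ne_zero [Field K] [Module K E] {f g : Dual K E} (hf : f ≠ 0) (hg : g ≠ 0) :
    ∃ v, f v * g v ≠ 0 := by
  by_contra! h
  exact (dual_eq_zero_or_eq_zero_of_mul_eq_zero h).elim hf hg

theorem dual_exists_eq_smul_add_smul [Field K] [Module K E] {f g k : Dual K E}
    (h : ∀ v, f v = 0 → g v = 0 → k v = 0) : ∃ a b : K, k = a • f + b • g := by
  have hk : k ∈ Submodule.span K (Set.range ![f, g]) :=
    mem_span_of_iInf_ker_le_ker fun v hv => by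
      have hv' : ∀ i, ![f, g] i v = 0 := by simpa using hv
      exact h v (hv' 0) (hv' 1)
  rw [range_cons_cons_empty, Submodule.mem_span_pair] at hk
  obtain ⟨a, b, rfl⟩ := hk
  exact ⟨a, b, rfl⟩

variable [Module (ZMod 2) E] {f g k b₀ b₁ c₀ c₁ : Dual (ZMod 2) E}

theorem dual_eq_zero_or_eq_of_ker_le (h : ∀ v, f v = 0 → g v = 0) : g = 0 ∨ g = f := by
  obtain ⟨a, b, rfl⟩ := dual_exists_eq_smul_add_smul (g := f) fun v hf _ => h v hf
  rcases eq_or_ne (a + b) 0 with hab | hab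
  · exact .inl (by rw [← add_smul, hab, zero_smul])
  · exact .inr (by rw [← add_smul, eq_one_of_ne_zero hab, one_smul])

theorem dual_add_eq_zero_of_mul_mul_eq_zero (hf : f ≠ 0) (hg : g ≠ 0) (hk : k ≠ 0)
    (h : ∀ v, f v * g v * k v = 0) : f + g + k = 0 := by
  obtain ⟨u, hu⟩ := dual_exists_mul_ne_zero hf hg
  have hku : k u = 0 := (mul_eq_zero.1 (h u)).resolve_left hu
  have hker : ∀ v, f v = 0 → g v = 0 → k v = 0 := fun v hfv hgv => by
    have huv := h (u + v)
    rw [map_add, map_add, map_add, hfv, hgv, hku, add_zero, add_zero, zero_add] at huv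
    exact (mul_eq_zero.1 huv).resolve_left hu
  obtain ⟨a, b, rfl⟩ := dual_exists_eq_smul_add_smul hker
  obtain ⟨hfu, hgu⟩ := mul_ne_zero_iff.1 hu
  obtain rfl : a = b := by
    simpa [eq_one_of_ne_zero hfu, eq_one_of_ne_zero hgu, CharTwo.add_eq_zero] using hku
  have ha : a ≠ 0 := by rintro rfl; simp at hk
  rw [eq_one_of_ne_zero ha, one_smul, one_smul, ZModModule.add_self]

theorem dual_exists_eq_smul_add_of_mul_mul_eq_zero (hg : g ≠ 0) (hk : k ≠ 0)
    (h : ∀ v, f v * g v * k v = 0) : ∃ l : ZMod 2, f = l • (g + k) := by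
  rcases eq_or_ne f 0 with rfl | hf
  · exact ⟨0, (zero_smul _ _).symm⟩
  · refine ⟨1, ?_⟩
    rw [one_smul, ← sub_eq_zero, ZModModule.sub_eq_add, ← add_assoc]
    exact dual_add_eq_zero_of_mul_mul_eq_zero hf hg hk h

theorem eq_of_add_eq_zero_of_zmod_two {x y : E} (h : x + y = 0) : x = y := by
  rwa [← sub_eq_zero, ZModModule.sub_eq_add]

theorem dual_pair_cases_of_add_mul_eq_zero (h : ∀ v, b₀ v * c₀ v + b₁ v * c₁ v = 0)
    (hb : b₀ ≠ 0 ∨ b₁ ≠ 0) (hc : c₀ ≠ 0 ∨ c₁ ≠ 0) :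
    (b₀ = 0 ∧ c₁ = 0) ∨ (b₁ = 0 ∧ c₀ = 0) ∨ (b₀ = b₁ ∧ c₀ = c₁) ∨
      (c₀ = b₁ ∧ c₁ = b₀ ∧ b₀ ≠ 0 ∧ b₁ ≠ 0 ∧ b₀ + b₁ ≠ 0) := by
  rcases eq_or_ne b₀ 0 with rfl | hb₀
  · exact .inl ⟨rfl, (dual_eq_zero_or_eq_zero_of_mul_eq_zero (by simpa using h)).resolve_left
      (hb.resolve_left (· rfl))⟩
  rcases eq_or_ne b₁ 0 with rfl | hb₁
  · exact .inr <| .inl ⟨rfl, (dual_eq_zero_or_eq_zero_of_mul_eq_zero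
      (by simpa using h)).resolve_left hb₀⟩
  rcases eq_or_ne (b₀ + b₁) 0 with hadd | hadd
  · obtain rfl := eq_of_add_eq_zero_of_zmod_two hadd
    have hc₀ : c₀ + c₁ = 0 := (dual_eq_zero_or_eq_zero_of_mul_eq_zero
      (g := c₀ + c₁) (by simpa [mul_add] using h)).resolve_left hb₀
    exact .inr <| .inr <| .inl ⟨rfl, eq_of_add_eq_zero_of_zmod_two hc₀⟩
  -- Multiplying the hypothesis by `b₀ + b₁` leaves `c₀ b₀ (b₀ + b₁) = c₁ b₁ (b₀ + b₁) = 0`.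
  obtain ⟨l, hl⟩ : ∃ l : ZMod 2, c₀ = l • b₁ := by
    convert! dual_exists_eq_smul_add_of_mul_mul_eq_zero (f := c₀) hb₀ hadd fun v => ?_
    · rw [← add_assoc, ZModModule.add_self, zero_add]
    · have := h v
      rw [LinearMap.add_apply]
      generalize b₀ v = x, b₁ v = y, c₀ v = z, c₁ v = w at this ⊢
      revert x y z w; decide
  obtain ⟨m, hm⟩ : ∃ m : ZMod 2, c₁ = m • b₀ := by
    convert! dual_exists_eq_smul_add_of_mul_mul_eq_zero (f := c₁) hb₁ hadd fun v => ?_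
    · rw [add_left_comm, ZModModule.add_self, add_zero]
    · have := h v
      rw [LinearMap.add_apply]
      generalize b₀ v = x, b₁ v = y, c₀ v = z, c₁ v = w at this ⊢
      revert x y z w; decide
  subst hl hm
  obtain ⟨u, hu⟩ := dual_exists_mul_ne_zero hb₀ hb₁
  obtain ⟨h₀, h₁⟩ := mul_ne_zero_iff.1 hu
  obtain rfl : l = m := by
    simpa [eq_one_of_ne_zero h₀, eq_one_of_ne_zero h₁, CharTwo.add_eq_zero] using h u
  have hl : l ≠ 0 := by rintro rfl; simp at hc
  rw [eq_one_of_ne_zero hl, one_smul, one_smul]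
  exact .inr <| .inr <| .inr ⟨rfl, rfl, hb₀, hb₁, hadd⟩

end LinearForms

/-! ### Ranks, minors and normal forms -/

section Rank

variable {K : Type*} [Field K]

theorem card_le_rank_of_det_submatrix_ne_zero {l m n : Type*} [Fintype l] [DecidableEq l]
    [Fintype n] {M : Matrix m n K} {r : l → m} {c : l → n} (h : (M.submatrix r c).det ≠ 0) :
    Fintype.card l ≤ M.rank :=
  (rank_of_det_ne_zero h).symm.trans_le (M.rank_submatrix_le r c)

theorem det_submatrix_eq_zero_of_rank_lt {m n : Type*} [Fintype n] {k : ℕ} {M : Matrix m n K}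
    (hM : M.rank < k) (r : Fin k → m) (c : Fin k → n) : (M.submatrix r c).det = 0 := by
  by_contra h
  exact hM.not_ge (by simpa using card_le_rank_of_det_submatrix_ne_zero h)

/-- The `n × k` matrix with the identity on top and zeros below. -/
def inc (K : Type*) [Field K] (n k : ℕ) : Matrix (Fin n) (Fin k) K :=
  of fun i a => if (i : ℕ) = a then 1 else 0

theorem inc_apply {n k : ℕ} (i : Fin n) (a : Fin k) :
    inc K n k i a = if (i : ℕ) = a then 1 else 0 := rfl

variable {n p k : ℕ}

theorem rank_eq_width_of_det_submatrix_ne_zero {Y : Matrix (Fin n) (Fin k) K} {r : Fin k → Fin n}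
    (h : (Y.submatrix r id).det ≠ 0) : Y.rank = k :=
  Y.rank_le_width.antisymm (by simpa using card_le_rank_of_det_submatrix_ne_zero h)

theorem inc_submatrix_castLE (h : k ≤ n) : (inc K n k).submatrix (Fin.castLE h) id = 1 := by
  ext i j
  simp [inc_apply, one_apply, Fin.ext_iff]

theorem rank_inc (h : k ≤ n) : (inc K n k).rank = k :=
  rank_eq_width_of_det_submatrix_ne_zero (r := Fin.castLE h) (by simp [inc_submatrix_castLE])

theorem mulVecLin_injective_of_rank_eq_width {Y : Matrix (Fin n) (Fin k) K} (h : Y.rank = k) :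
    Function.Injective Y.mulVecLin := by
  have hsum := Y.mulVecLin.finrank_range_add_finrank_ker
  rw [← rank, h, Module.finrank_fin_fun] at hsum
  exact LinearMap.ker_eq_bot.1 (Submodule.finrank_eq_zero.1 (by omega))

theorem exists_isUnit_mul_eq {Y Z : Matrix (Fin n) (Fin k) K} (hY : Y.rank = k)
    (hZ : Z.rank = k) : ∃ P : Matrix (Fin n) (Fin n) K, IsUnit P ∧ P * Y = Z := by
  let eY := LinearEquiv.ofInjective _ (mulVecLin_injective_of_rank_eq_width hY)
  let eZ := LinearEquiv.ofInjective _ (mulVecLin_injective_of_rank_eq_width hZ)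
  obtain ⟨g, hg⟩ := Submodule.exists_linearEquiv_restrict_eq (eY.symm.trans eZ)
  have hgY (v : Fin k → K) : g (Y *ᵥ v) = Z *ᵥ v := by
    have hv : ((eY.symm.trans eZ (eY v) : _) : Fin n → K) = g (eY v) := hg (eY v)
    rw [LinearEquiv.trans_apply, LinearEquiv.symm_apply_apply] at hv
    exact hv.symm
  refine ⟨LinearMap.toMatrix' g.toLinearMap, ?_, toLin'.injective (LinearMap.ext fun v => ?_)⟩
  · rw [isUnit_iff_isUnit_det]
    simpa using LinearEquiv.isUnit_det' g
  · simpa [toLin'_mul, toLin'_toMatrix'] using hgY v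

theorem exists_mul_isUnit_eq {X Z : Matrix (Fin k) (Fin p) K} (hX : X.rank = k)
    (hZ : Z.rank = k) : ∃ Q : Matrix (Fin p) (Fin p) K, IsUnit Q ∧ X * Q = Z := by
  obtain ⟨P, hP, h⟩ := exists_isUnit_mul_eq (Y := Xᵀ) (Z := Zᵀ) (by rwa [rank_transpose])
    (by rwa [rank_transpose])
  refine ⟨Pᵀ, isUnit_transpose P |>.2 hP, ?_⟩
  rw [← transpose_transpose (X * Pᵀ), transpose_mul, transpose_transpose, h, transpose_transpose]

theorem exists_isUnit_mul_eq_inc {Y : Matrix (Fin n) (Fin k) K} (hY : Y.rank = k) :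
    ∃ P : Matrix (Fin n) (Fin n) K, IsUnit P ∧ P * Y = inc K n k :=
  exists_isUnit_mul_eq hY (rank_inc (hY ▸ Y.rank_le_height))

theorem exists_mul_isUnit_eq_inc_transpose {X : Matrix (Fin k) (Fin p) K} (hX : X.rank = k) :
    ∃ Q : Matrix (Fin p) (Fin p) K, IsUnit Q ∧ X * Q = (inc K p k)ᵀ :=
  exists_mul_isUnit_eq hX <| by rw [rank_transpose, rank_inc (hX ▸ X.rank_le_width)]

theorem exists_mul_eq_one_of_rank_eq_width {Y : Matrix (Fin n) (Fin k) K} (hY : Y.rank = k) :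
    ∃ Y' : Matrix (Fin k) (Fin n) K, Y' * Y = 1 := by
  have hkn : k ≤ n := hY ▸ Y.rank_le_height
  obtain ⟨P, -, hP⟩ := exists_isUnit_mul_eq_inc hY
  refine ⟨P.submatrix (Fin.castLE hkn) id, ?_⟩
  rw [← inc_submatrix_castLE hkn, ← hP]
  rfl

theorem det_eq_zero_of_rank_lt {A : Matrix (Fin k) (Fin k) K} (hA : A.rank < k) : A.det = 0 := by
  simpa using det_submatrix_eq_zero_of_rank_lt hA id id

theorem rank_lt_iff_det_eq_zero {A : Matrix (Fin k) (Fin k) K} :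
    A.rank < k ↔ A.det = 0 := by
  refine ⟨det_eq_zero_of_rank_lt, fun hdet => A.rank_le_width.lt_of_ne fun hrank => ?_⟩
  have hunit := mulVec_injective_iff_isUnit.1 (mulVecLin_injective_of_rank_eq_width hrank)
  exact ((isUnit_iff_isUnit_det A).1 hunit).ne_zero hdet

theorem exists_rank_factorization (M : Matrix (Fin n) (Fin p) K) :
    ∃ (Y : Matrix (Fin n) (Fin M.rank) K) (X : Matrix (Fin M.rank) (Fin p) K), M = Y * X := by
  let b := Module.finBasisOfFinrankEq K (LinearMap.range M.mulVecLin) (n := M.rank) rfl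
  let col (j : Fin p) : LinearMap.range M.mulVecLin := ⟨M.mulVecLin (Pi.single j 1), _, rfl⟩
  refine ⟨of fun i a => (b a : Fin n → K) i, of fun a j => b.repr (col j) a, ?_⟩
  ext i j
  calc M i j = (col j : Fin n → K) i := by simp [col]
    _ = ((∑ a, b.repr (col j) a • b a : LinearMap.range M.mulVecLin) : Fin n → K) i := by
        rw [b.sum_repr]
    _ = _ := by
      simp only [AddSubmonoidClass.coe_finsetSum, Submodule.coe_smul, Finset.sum_apply,
        Pi.smul_apply, smul_eq_mul, mul_comm, mul_apply, of_apply]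

theorem exists_mul_mul_eq_inc_mul_inc_transpose (M : Matrix (Fin n) (Fin p) K) :
    ∃ (P : Matrix (Fin n) (Fin n) K) (Q : Matrix (Fin p) (Fin p) K),
      IsUnit P ∧ IsUnit Q ∧ P * M * Q = inc K n M.rank * (inc K p M.rank)ᵀ := by
  obtain ⟨Y, X, hYX⟩ := exists_rank_factorization M
  have hY : Y.rank = M.rank :=
    Y.rank_le_width.antisymm ((congrArg rank hYX).trans_le (rank_mul_le_left Y X))
  have hX : X.rank = M.rank :=
    X.rank_le_height.antisymm ((congrArg rank hYX).trans_le (rank_mul_le_right Y X))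
  obtain ⟨P, hP, hPY⟩ := exists_isUnit_mul_eq_inc hY
  obtain ⟨Q, hQ, hXQ⟩ := exists_mul_isUnit_eq_inc_transpose hX
  refine ⟨P, Q, hP, hQ, ?_⟩
  rw [← hPY, ← hXQ, Matrix.mul_assoc P Y, ← Matrix.mul_assoc Y X, ← hYX, ← Matrix.mul_assoc]

end Rank

/-! ### Equivalence and embeddings -/

section Fits

variable {K : Type*} [Field K] {n p s t : ℕ}

/-- `V` is carried into `S` by an equivalence, that is, `V` is equivalent to a subspace of `S`. -/
def Fits (V S : Submodule K (Matrix (Fin n) (Fin p) K)) : Prop :=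
  ∃ (P : Matrix (Fin n) (Fin n) K) (Q : Matrix (Fin p) (Fin p) K),
    IsUnit P ∧ IsUnit Q ∧ ∀ M ∈ V, P * M * Q ∈ S

/-- The linear map `A ↦ Y A X` given by fixed outer factors. -/
def sandwich {l m n o : Type*} [Fintype m] [Fintype n] (Y : Matrix l m K) (X : Matrix n o K) :
    Matrix m n K →ₗ[K] Matrix l o K where
  toFun A := Y * A * X
  map_add' A B := by rw [Matrix.mul_add, Matrix.add_mul]
  map_smul' c A := by simp

theorem sandwich_apply {l m n o : Type*} [Fintype m] [Fintype n] (Y : Matrix l m K)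
    (X : Matrix n o K) (A : Matrix m n K) : sandwich Y X A = Y * A * X := rfl

theorem rank_sandwich_le {l m n o : Type*} [Fintype m] [Fintype n] [Fintype o] (Y : Matrix l m K)
    (X : Matrix n o K) (A : Matrix m n K) : (sandwich Y X A).rank ≤ A.rank :=
  (rank_mul_le_left _ _).trans (rank_mul_le_right _ _)

theorem exists_leftInverse_sandwich {Y : Matrix (Fin n) (Fin s) K} {X : Matrix (Fin t) (Fin p) K}
    (hY : Y.rank = s) (hX : X.rank = t) : ∃ (Y' : Matrix (Fin s) (Fin n) K)
      (X' : Matrix (Fin p) (Fin t) K), Function.LeftInverse (sandwich Y' X') (sandwich Y X) := by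
  obtain ⟨Y', hY'⟩ := exists_mul_eq_one_of_rank_eq_width hY
  obtain ⟨X', hX'⟩ := exists_mul_eq_one_of_rank_eq_width (rank_transpose X |>.trans hX)
  refine ⟨Y', X'ᵀ, fun A => ?_⟩
  calc Y' * (Y * A * X) * X'ᵀ = (Y' * Y) * A * (X' * Xᵀ)ᵀ := by
        simp only [transpose_mul, transpose_transpose, Matrix.mul_assoc]
    _ = A := by rw [hY', hX', Matrix.one_mul, transpose_one, Matrix.mul_one]

theorem sandwich_injective {Y : Matrix (Fin n) (Fin s) K} {X : Matrix (Fin t) (Fin p) K}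
    (hY : Y.rank = s) (hX : X.rank = t) : Function.Injective (sandwich Y X) :=
  let ⟨_, _, h⟩ := exists_leftInverse_sandwich hY hX
  h.injective

theorem rank_sandwich {Y : Matrix (Fin n) (Fin s) K} {X : Matrix (Fin t) (Fin p) K}
    (hY : Y.rank = s) (hX : X.rank = t) (A : Matrix (Fin s) (Fin t) K) :
    (sandwich Y X A).rank = A.rank := by
  obtain ⟨Y', X', h⟩ := exists_leftInverse_sandwich hY hX
  refine (rank_sandwich_le Y X A).antisymm ?_
  calc A.rank = (sandwich Y' X' (sandwich Y X A)).rank := by rw [h A]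
    _ ≤ (sandwich Y X A).rank := rank_sandwich_le _ _ _

variable {V S : Submodule K (Matrix (Fin n) (Fin p) K)}

theorem Fits.of_map {P : Matrix (Fin n) (Fin n) K} {Q : Matrix (Fin p) (Fin p) K}
    (hP : IsUnit P) (hQ : IsUnit Q) : Fits (V.map (sandwich P Q)) S → Fits V S := by
  rintro ⟨P', Q', hP', hQ', h⟩
  refine ⟨P' * P, Q * Q', hP'.mul hP, hQ.mul hQ', fun M hM => ?_⟩
  simpa only [sandwich_apply, Matrix.mul_assoc] using h _ (Submodule.mem_map_of_mem hM)

theorem isUnit_permMatrix {R m : Type*} [CommRing R] [Fintype m] [DecidableEq m]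
    (σ : Equiv.Perm m) : IsUnit (σ.permMatrix R) := by
  rw [isUnit_iff_isUnit_det, det_permutation]
  exact (Int.isUnit_iff.2 (Int.units_eq_one_or σ.sign |>.imp (by simp [·]) (by simp [·]))).map
    (Int.castRingHom R)

theorem Fits.of_mul_submatrix_mul {P : Matrix (Fin n) (Fin n) K} {Q : Matrix (Fin p) (Fin p) K}
    (hP : IsUnit P) (hQ : IsUnit Q) (σ : Equiv.Perm (Fin n)) (τ : Equiv.Perm (Fin p))
    (h : ∀ M ∈ V, P * M.submatrix σ τ * Q ∈ S) : Fits V S := by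
  refine ⟨P * σ.permMatrix K, τ⁻¹.permMatrix K * Q, hP.mul (isUnit_permMatrix σ),
    (isUnit_permMatrix _).mul hQ, fun M hM => ?_⟩
  have hM' : σ.permMatrix K * (M * τ⁻¹.permMatrix K) = M.submatrix σ τ := by
    simp [PEquiv.toMatrix_toPEquiv_mul, PEquiv.mul_toMatrix_toPEquiv, Equiv.Perm.inv_def]
  simpa only [← hM', Matrix.mul_assoc] using h M hM

theorem Fits.of_submatrix (σ : Equiv.Perm (Fin n)) (τ : Equiv.Perm (Fin p))
    (h : ∀ M ∈ V, M.submatrix σ τ ∈ S) : Fits V S :=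
  .of_mul_submatrix_mul isUnit_one isUnit_one σ τ fun M hM => by simpa using h M hM

theorem inc_mulVec_apply {k : ℕ} (v : Fin k → K) (i : Fin n) :
    (inc K n k *ᵥ v) i = if h : (i : ℕ) < k then v ⟨i, h⟩ else 0 := by
  rw [mulVec, dotProduct]
  split_ifs with h
  · rw [Finset.sum_eq_single_of_mem ⟨i, h⟩ (Finset.mem_univ _)]
    · simp [inc_apply]
    · intro a _ ha
      rw [inc_apply, if_neg fun hia => ha (Fin.ext hia.symm), zero_mul]
  · refine Finset.sum_eq_zero fun a _ => ?_
    rw [inc_apply, if_neg (by omega), zero_mul]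

theorem inc_mul_apply {k : ℕ} (A : Matrix (Fin k) (Fin p) K) (i : Fin n) (j : Fin p) :
    (inc K n k * A) i j = if h : (i : ℕ) < k then A ⟨i, h⟩ j else 0 :=
  inc_mulVec_apply (fun a => A a j) i

theorem mul_inc_transpose_apply {k : ℕ} (A : Matrix (Fin n) (Fin k) K) (i : Fin n) (j : Fin p) :
    (A * (inc K p k)ᵀ) i j = if h : (j : ℕ) < k then A i ⟨j, h⟩ else 0 := by
  rw [← transpose_transpose A, ← transpose_mul, transpose_apply, inc_mul_apply]
  rfl

theorem exists_perm_castLE_eq {s : ℕ} (hs : s ≤ n) {r : Fin s → Fin n} (hr : r.Injective) :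
    ∃ σ : Equiv.Perm (Fin n), ∀ a, σ (Fin.castLE hs a) = r a := by
  let e := (Equiv.ofInjective _ (Fin.castLE_injective hs)).symm.trans (Equiv.ofInjective r hr)
  refine ⟨e.extendSubtype, fun a => ?_⟩
  rw [Equiv.extendSubtype_apply_of_mem _ _ ⟨a, rfl⟩]
  simp [e, Equiv.ofInjective_symm_apply]

theorem fits_Rst_of_apply_eq_zero {r : Fin s → Fin n} {c : Fin t → Fin p} (hr : r.Injective)
    (hc : c.Injective) (hV : ∀ M ∈ V, ∀ i j, i ∉ Set.range r → j ∉ Set.range c → M i j = 0) :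
    Fits V (Rst K n p s t) := by
  obtain ⟨σ, hσ⟩ := exists_perm_castLE_eq (by simpa using Fintype.card_le_of_injective r hr) hr
  obtain ⟨τ, hτ⟩ := exists_perm_castLE_eq (by simpa using Fintype.card_le_of_injective c hc) hc
  refine .of_submatrix σ τ fun M hM i j hi hj => hV M hM _ _ ?_ ?_
  · rintro ⟨a, ha⟩
    rw [← hσ, σ.apply_eq_iff_eq] at ha
    exact (ha ▸ hi).not_gt a.2
  · rintro ⟨b, hb⟩
    rw [← hτ, τ.apply_eq_iff_eq] at hb
    exact (hb ▸ hj).not_gt b.2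

theorem inc_mul_mul_inc_transpose_apply {k : ℕ} (A : Matrix (Fin k) (Fin k) K) (i : Fin n)
    (j : Fin p) : (inc K n k * A * (inc K p k)ᵀ) i j =
      if h : (i : ℕ) < k ∧ (j : ℕ) < k then A ⟨i, h.1⟩ ⟨j, h.2⟩ else 0 := by
  rw [mul_inc_transpose_apply]
  simp only [inc_mul_apply]
  split_ifs <;> first | rfl | omega

theorem eq_inc_mul_mul_inc_transpose {k : ℕ} (hn : k ≤ n) (hp : k ≤ p)
    {M : Matrix (Fin n) (Fin p) K}
    (hM : ∀ (i : Fin n) (j : Fin p), k ≤ (i : ℕ) ∨ k ≤ (j : ℕ) → M i j = 0) :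
    M = inc K n k * M.submatrix (Fin.castLE hn) (Fin.castLE hp) * (inc K p k)ᵀ := by
  ext i j
  rw [inc_mul_mul_inc_transpose_apply]
  split_ifs with h
  · rfl
  · exact hM i j (by omega)

end Fits

section Embed

variable {n p : ℕ} {hn : 3 ≤ n} {hp : 3 ≤ p}
  {W : Submodule (ZMod 2) (Matrix (Fin 3) (Fin 3) (ZMod 2))}

theorem embed_eq_map :
    embed n p hn hp W = W.map (sandwich (inc (ZMod 2) n 3) (inc (ZMod 2) p 3)ᵀ) := by
  ext M
  constructor
  · rintro ⟨hMW, hM⟩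
    exact ⟨_, hMW, (eq_inc_mul_mul_inc_transpose hn hp hM).symm⟩
  · rintro ⟨A, hA, rfl⟩
    refine ⟨?_, fun i j h => ?_⟩
    · refine Set.mem_of_eq_of_mem (Matrix.ext fun i j => ?_) hA
      simp [sandwich_apply, inc_mul_mul_inc_transpose_apply]
    · rw [sandwich_apply, inc_mul_mul_inc_transpose_apply, dif_neg (by omega)]

theorem fits_embed {V : Submodule (ZMod 2) (Matrix (Fin n) (Fin p) (ZMod 2))}
    {Y : Matrix (Fin n) (Fin 3) (ZMod 2)} {X : Matrix (Fin 3) (Fin p) (ZMod 2)}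
    (hY : Y.rank = 3) (hX : X.rank = 3)
    (hV : ∀ M ∈ V, ∃ A : Matrix (Fin 3) (Fin 3) (ZMod 2), M = Y * A * X)
    (hW : Fits (V.comap (sandwich Y X)) W) : Fits V (embed n p hn hp W) := by
  obtain ⟨G, H, hG, hH, hGH⟩ := hW
  obtain ⟨P, hP, hPY⟩ := exists_isUnit_mul_eq hY (Z := inc (ZMod 2) n 3 * G) <| by
    rw [rank_mul_eq_left_of_isUnit_det _ _ ((isUnit_iff_isUnit_det G).1 hG), rank_inc hn]
  obtain ⟨Q, hQ, hXQ⟩ := exists_mul_isUnit_eq hX (Z := H * (inc (ZMod 2) p 3)ᵀ) <| by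
    rw [rank_mul_eq_right_of_isUnit_det _ _ ((isUnit_iff_isUnit_det H).1 hH), rank_transpose,
      rank_inc hp]
  refine ⟨P, Q, hP, hQ, fun M hM => ?_⟩
  obtain ⟨A, rfl⟩ := hV M hM
  rw [embed_eq_map]
  refine ⟨G * A * H, hGH A hM, ?_⟩
  calc inc (ZMod 2) n 3 * (G * A * H) * (inc (ZMod 2) p 3)ᵀ
      = (inc (ZMod 2) n 3 * G) * A * (H * (inc (ZMod 2) p 3)ᵀ) := by
        simp only [Matrix.mul_assoc]
    _ = P * (Y * A * X) * Q := by rw [← hPY, ← hXQ]; simp only [Matrix.mul_assoc]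

end Embed

/-! ### Rigid sets of square matrices -/

section Rigid

variable {K : Type*} [Field K] {n p k : ℕ}

/-- A set `W` of `k × k` matrices, closed under transposition, is *rigid* when for no `A` can all
the matrices in `A + W` be bordered by one and the same nonzero column without any of the `k × k`
minors through that column becoming nonzero (the minors are the entries of `cramer (A + B) c`).
A space of matrices of rank less than `k` that contains a copy of `W` then lives in the same
`k × k` corner. -/
structure IsRigid (W : Set (Matrix (Fin k) (Fin k) K)) : Prop where
  transpose_mem : ∀ B ∈ W, Bᵀ ∈ W
  eq_zero_of_cramer : ∀ (A : Matrix (Fin k) (Fin k) K) (c : Fin k → K),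
    (∀ B ∈ W, (A + B).cramer c = 0) → c = 0

variable {W : Set (Matrix (Fin k) (Fin k) K)} {V : Submodule K (Matrix (Fin n) (Fin p) K)}

theorem IsRigid.apply_eq_zero_of_lt_of_le (hW : IsRigid W) (hn : k ≤ n) (hp : k ≤ p)
    (hV : ∀ M ∈ V, M.rank < k) (hWV : ∀ B ∈ W, inc K n k * B * (inc K p k)ᵀ ∈ V)
    {M : Matrix (Fin n) (Fin p) K} (hM : M ∈ V) {i : Fin n} {j : Fin p} (hi : (i : ℕ) < k)
    (hj : k ≤ (j : ℕ)) : M i j = 0 := by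
  let A := M.submatrix (Fin.castLE hn) (Fin.castLE hp)
  refine congrFun (hW.eq_zero_of_cramer A (fun a => M (Fin.castLE hn a) j) fun B hB => ?_) ⟨i, hi⟩
  ext b
  rw [Pi.zero_apply, cramer_apply, ← det_submatrix_eq_zero_of_rank_lt
    (hV _ (V.add_mem hM (hWV B hB))) (Fin.castLE hn) (Function.update (Fin.castLE hp) b j)]
  congr 1
  ext a b'
  rcases eq_or_ne b' b with rfl | hb
  · simp [inc_mul_mul_inc_transpose_apply, hj.not_gt]
  · simp [inc_mul_mul_inc_transpose_apply, hb, A]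

theorem IsRigid.apply_eq_zero_of_le (hW : IsRigid W) (hn : k ≤ n) (hp : k ≤ p) (hk : 0 < k)
    (hV : ∀ M ∈ V, M.rank < k) (hWV : ∀ B ∈ W, inc K n k * B * (inc K p k)ᵀ ∈ V)
    {M : Matrix (Fin n) (Fin p) K} (hM : M ∈ V) (i : Fin n) {j : Fin p} (hj : k ≤ (j : ℕ)) :
    M i j = 0 := by
  rcases lt_or_ge (i : ℕ) k with hi | hi
  · exact hW.apply_eq_zero_of_lt_of_le hn hp hV hWV hM hi hj
  -- Adding row `i` to row `0` does not affect the copy of `W`.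
  let o : Fin n := ⟨0, hk.trans_le hn⟩
  let P := transvection o i (1 : K)
  have hP : ∀ N : Matrix (Fin n) (Fin p) K, P * N * (1 : Matrix (Fin p) (Fin p) K) = P * N :=
    fun N => Matrix.mul_one _
  have hPM : (P * M) o j = 0 := by
    refine hW.apply_eq_zero_of_lt_of_le hn hp (V := V.map (sandwich P 1)) ?_ (fun B hB => ?_)
      ⟨M, hM, hP M⟩ hk hj
    · rintro _ ⟨N, hN, rfl⟩
      exact (rank_sandwich_le P 1 N).trans_lt (hV N hN)
    · refine ⟨_, hWV B hB, (hP _).trans ?_⟩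
      ext i' j'
      rcases eq_or_ne i' o with rfl | hi'
      · rw [transvection_mul_apply_same, inc_mul_mul_inc_transpose_apply (i := i),
          dif_neg (by omega), mul_zero, add_zero]
      · rw [transvection_mul_apply_of_ne _ _ _ _ hi']
  rwa [transvection_mul_apply_same, hW.apply_eq_zero_of_lt_of_le hn hp hV hWV hM (i := o) hk hj,
    zero_add, one_mul] at hPM

theorem IsRigid.apply_eq_zero (hW : IsRigid W) (hn : k ≤ n) (hp : k ≤ p) (hk : 0 < k)
    (hV : ∀ M ∈ V, M.rank < k) (hWV : ∀ B ∈ W, inc K n k * B * (inc K p k)ᵀ ∈ V)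
    {M : Matrix (Fin n) (Fin p) K} (hM : M ∈ V) (i : Fin n) (j : Fin p)
    (hij : k ≤ (i : ℕ) ∨ k ≤ (j : ℕ)) : M i j = 0 := by
  rcases hij with hi | hj
  · refine hW.apply_eq_zero_of_le (M := Mᵀ)
      (V := V.map (transposeLinearEquiv (Fin n) (Fin p) K K).toLinearMap)
      hp hn hk ?_ (fun B hB => ?_) ⟨M, hM, rfl⟩ j hi
    · rintro _ ⟨N, hN, rfl⟩
      exact (rank_transpose N).trans_lt (hV N hN)
    · exact ⟨_, hWV _ (hW.transpose_mem B hB), by simp [Matrix.mul_assoc]⟩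
  · exact hW.apply_eq_zero_of_le hn hp hk hV hWV hM i hj

theorem IsRigid.exists_eq_mul_mul (hW : IsRigid W) (hk : 0 < k) (hV : ∀ M ∈ V, M.rank < k)
    {Y : Matrix (Fin n) (Fin k) K} {X : Matrix (Fin k) (Fin p) K} (hY : Y.rank = k)
    (hX : X.rank = k) (hWV : ∀ B ∈ W, Y * B * X ∈ V) {M : Matrix (Fin n) (Fin p) K} (hM : M ∈ V) :
    ∃ A : Matrix (Fin k) (Fin k) K, M = Y * A * X := by
  have hn : k ≤ n := hY ▸ Y.rank_le_height
  have hp : k ≤ p := hX ▸ X.rank_le_width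
  obtain ⟨P, hP, hPY⟩ := exists_isUnit_mul_eq_inc hY
  obtain ⟨Q, hQ, hXQ⟩ := exists_mul_isUnit_eq_inc_transpose hX
  have hPQ (A : Matrix (Fin k) (Fin k) K) :
      P * (Y * A * X) * Q = inc K n k * A * (inc K p k)ᵀ := by
    rw [← hPY, ← hXQ]
    simp only [Matrix.mul_assoc]
  have hPMQ := eq_inc_mul_mul_inc_transpose hn hp <| hW.apply_eq_zero hn hp hk
    (V := V.map (sandwich P Q)) (by
      rintro _ ⟨N, hN, rfl⟩
      exact (rank_sandwich_le P Q N).trans_lt (hV N hN))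
    (fun B hB => ⟨_, hWV B hB, hPQ B⟩) (M := P * M * Q) ⟨M, hM, rfl⟩
  rw [← hPQ] at hPMQ
  refine ⟨_, sandwich_injective ?_ ?_ hPMQ⟩ <;> simp [rank_of_isUnit, hP, hQ]

end Rigid

/-- The diagonal `3 × 3` matrices of trace zero, by their first two entries. -/
def traceZeroDiagonal (r s : ZMod 2) : Matrix (Fin 3) (Fin 3) (ZMod 2) :=
  !![r, 0, 0; 0, s, 0; 0, 0, r + s]

theorem sum_zmod_two {E : Type*} [AddCommMonoid E] (f : ZMod 2 → E) : ∑ r, f r = f 0 + f 1 :=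
  Fin.sum_univ_two f

theorem sum_adjugate_add_traceZeroDiagonal (A : Matrix (Fin 3) (Fin 3) (ZMod 2)) :
    ∑ r, ∑ s, (A + traceZeroDiagonal r s).adjugate = 1 := by
  simp only [adjugate_fin_three, traceZeroDiagonal]
  ext i j
  fin_cases i <;> fin_cases j <;> simp [sum_zmod_two, one_apply] <;> grind

theorem isRigid_traceZeroDiagonal :
    IsRigid {B | ∃ r s, B = traceZeroDiagonal r s} where
  transpose_mem := by
    rintro _ ⟨r, s, rfl⟩
    exact ⟨r, s, by ext i j; fin_cases i <;> fin_cases j <;> rfl⟩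
  eq_zero_of_cramer A c h := by
    have h' (r s : ZMod 2) : (A + traceZeroDiagonal r s).adjugate *ᵥ c = 0 :=
      (cramer_eq_adjugate_mulVec _ _).symm.trans (h _ ⟨r, s, rfl⟩)
    rw [← one_mulVec c, ← sum_adjugate_add_traceZeroDiagonal A]
    simp only [sum_mulVec, h', Finset.sum_const_zero]

/-- The alternating `3 × 3` matrices, by their entries above the diagonal. -/
def alternating (x y z : ZMod 2) : Matrix (Fin 3) (Fin 3) (ZMod 2) :=
  !![0, x, y; x, 0, z; y, z, 0]

theorem sum_adjugate_add_alternating_left (A : Matrix (Fin 3) (Fin 3) (ZMod 2)) :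
    ∑ x, ∑ y, (A + alternating x y 0).adjugate = !![0, 0, 0; 0, 0, 1; 0, 1, 0] := by
  simp only [adjugate_fin_three, alternating]
  ext i j
  fin_cases i <;> fin_cases j <;> simp [sum_zmod_two] <;> grind

theorem sum_adjugate_add_alternating_right (A : Matrix (Fin 3) (Fin 3) (ZMod 2)) :
    ∑ y, ∑ z, (A + alternating 0 y z).adjugate = !![0, 1, 0; 1, 0, 0; 0, 0, 0] := by
  simp only [adjugate_fin_three, alternating]
  ext i j
  fin_cases i <;> fin_cases j <;> simp [sum_zmod_two] <;> grind

theorem isRigid_alternating : IsRigid {B | ∃ x y z, B = alternating x y z} where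
  transpose_mem := by
    rintro _ ⟨x, y, z, rfl⟩
    exact ⟨x, y, z, by ext i j; fin_cases i <;> fin_cases j <;> rfl⟩
  eq_zero_of_cramer A c h := by
    have h' (x y z : ZMod 2) : (A + alternating x y z).adjugate *ᵥ c = 0 :=
      (cramer_eq_adjugate_mulVec _ _).symm.trans (h _ ⟨x, y, z, rfl⟩)
    have h₁₂ := congrArg (· *ᵥ c) (sum_adjugate_add_alternating_left A)
    have h₀₁ := congrArg (· *ᵥ c) (sum_adjugate_add_alternating_right A)
    simp only [sum_mulVec, h', Finset.sum_const_zero] at h₁₂ h₀₁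
    ext i
    fin_cases i
    · simpa [mulVec, dotProduct, Fin.sum_univ_three] using (congrFun h₀₁ 1).symm
    · simpa [mulVec, dotProduct, Fin.sum_univ_three] using (congrFun h₁₂ 2).symm
    · simpa [mulVec, dotProduct, Fin.sum_univ_three] using (congrFun h₁₂ 1).symm

/-! ### Spaces of three by three matrices containing the diagonal matrices of trace zero -/

/-- The entry at `(i, j)` as a linear form on a space of matrices. -/
def entry {K m n : Type*} [CommSemiring K] (V : Submodule K (Matrix m n K)) (i : m) (j : n) :
    Module.Dual K V :=
  entryLinearMap K K i j ∘ₗ V.subtype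

theorem entry_eq_zero_iff {K m n : Type*} [CommSemiring K] {V : Submodule K (Matrix m n K)} {i : m}
    {j : n} : entry V i j = 0 ↔ ∀ M ∈ V, M i j = 0 := by
  rw [LinearMap.ext_iff, Subtype.forall]
  rfl

theorem mem_J3_iff {A : Matrix (Fin 3) (Fin 3) (ZMod 2)} :
    A ∈ J3 ↔ A.trace = 0 ∧ A 1 0 = 0 ∧ A 2 0 = 0 ∧ A 2 1 = 0 := by
  change (A.trace = 0 ∧ ∀ i j : Fin 3, j < i → A i j = 0) ↔ _
  simp [Fin.forall_fin_succ]

theorem mem_V3_iff {A : Matrix (Fin 3) (Fin 3) (ZMod 2)} :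
    A ∈ V3 ↔ A 0 0 = 0 ∧ A 1 1 = 0 ∧ A 2 2 = 0 ∧ A 0 1 + A 1 2 + A 2 0 = 0 ∧
      A 2 1 + A 1 0 + A 0 2 = 0 := by
  change ((∀ i : Fin 3, A i i = 0) ∧ A 0 1 + A 1 2 + A 2 0 = 0 ∧ A 2 1 + A 1 0 + A 0 2 = 0) ↔ _
  simp [Fin.forall_fin_succ, and_assoc]

theorem identities_of_det_add_traceZeroDiagonal {A : Matrix (Fin 3) (Fin 3) (ZMod 2)}
    (h : ∀ r s, (A + traceZeroDiagonal r s).det = 0) :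
    A.trace = 0 ∧ A 0 1 * A 1 0 = A 1 2 * A 2 1 ∧ A 0 1 * A 1 0 = A 0 2 * A 2 0 ∧
      A 0 1 * A 1 2 * A 2 0 = A 0 2 * A 2 1 * A 1 0 := by
  have h₀₀ := h 0 0
  have h₀₁ := h 0 1
  have h₁₀ := h 1 0
  have h₁₁ := h 1 1
  have hsq₀ := mul_self_zmod_two (A 1 1)
  have hsq₁ := mul_self_zmod_two (A 2 2)
  simp only [det_fin_three, Matrix.add_apply, traceZeroDiagonal, of_apply, cons_val, cons_val_zero,
    cons_val_one] at h₀₀ h₀₁ h₁₀ h₁₁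
  rw [trace_fin_three]
  clear h
  grind

theorem trace_submatrix_perm {m R : Type*} [Fintype m] [AddCommMonoid R] (σ : Equiv.Perm m)
    (A : Matrix m m R) : (A.submatrix σ σ).trace = A.trace :=
  Equiv.sum_comp σ fun i => A i i

section ContainingDiagonal

variable {V : Submodule (ZMod 2) (Matrix (Fin 3) (Fin 3) (ZMod 2))}

theorem fits_J3_of_entry_eq_zero (htr : ∀ A ∈ V, A.trace = 0) (σ : Equiv.Perm (Fin 3))
    (h₁₀ : entry V (σ 1) (σ 0) = 0) (h₂₀ : entry V (σ 2) (σ 0) = 0)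
    (h₂₁ : entry V (σ 2) (σ 1) = 0) : Fits V J3 := by
  rw [entry_eq_zero_iff] at h₁₀ h₂₀ h₂₁
  exact .of_submatrix σ σ fun A hA =>
    mem_J3_iff.2 ⟨(trace_submatrix_perm σ A).trans (htr A hA), h₁₀ A hA, h₂₀ A hA, h₂₁ A hA⟩

theorem fits_V3_of_constant_above_below (htr : ∀ A ∈ V, A.trace = 0) (σ : Equiv.Perm (Fin 3))
    (h : ∀ A ∈ V, A (σ 0) (σ 1) = A (σ 1) (σ 2) ∧ A (σ 0) (σ 2) = A (σ 1) (σ 2) ∧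
      A (σ 1) (σ 0) = A (σ 2) (σ 1) ∧ A (σ 2) (σ 0) = A (σ 2) (σ 1)) : Fits V V3 := by
  refine .of_mul_submatrix_mul (P := !![0, 0, 1; 0, 1, 1; 1, 0, 0])
    (Q := !![1, 1, 0; 1, 0, 1; 0, 0, 1]) ((isUnit_iff_isUnit_det _).2 (by simp [det_fin_three]))
    ((isUnit_iff_isUnit_det _).2 (by simp [det_fin_three])) σ σ fun A hA => ?_
  have htrA := (trace_submatrix_perm σ A).trans (htr A hA)
  obtain ⟨h₁, h₂, h₃, h₄⟩ := h A hA
  simp only [trace_fin_three, submatrix_apply] at htrA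
  simp only [mem_V3_iff, mul_apply, Fin.sum_univ_three, submatrix_apply, of_apply, cons_val,
    cons_val_zero, cons_val_one]
  grind

theorem opposite_entries_of_mul_eq_mul {A J : Matrix (Fin 3) (Fin 3) (ZMod 2)}
    (hJ : J 0 1 * J 1 0 ≠ 0) (hJ₁ : J 0 1 * J 1 0 = J 1 2 * J 2 1)
    (hJ₂ : J 0 1 * J 1 0 = J 0 2 * J 2 0) (hA₁ : A 0 1 * A 1 0 = A 1 2 * A 2 1)
    (hA₂ : A 0 1 * A 1 0 = A 0 2 * A 2 0)
    (hAJ₁ : (A + J) 0 1 * (A + J) 1 0 = (A + J) 1 2 * (A + J) 2 1)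
    (hAJ₂ : (A + J) 0 1 * (A + J) 1 0 = (A + J) 0 2 * (A + J) 2 0) :
    A 1 2 + A 2 1 = A 0 1 + A 1 0 ∧ A 0 2 + A 2 0 = A 0 1 + A 1 0 ∧
      (A 0 1 + A 1 0 = 0 → A 0 1 = A 1 2 ∧ A 1 2 = A 2 0) := by
  have hJ' : ∀ i j, J i j ≠ 0 → J i j = 1 := fun i j => eq_one_of_ne_zero
  simp only [Matrix.add_apply, hJ' 0 1 (by grind), hJ' 1 0 (by grind), hJ' 1 2 (by grind),
    hJ' 2 1 (by grind), hJ' 0 2 (by grind), hJ' 2 0 (by grind)] at hAJ₁ hAJ₂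
  clear hJ hJ₁ hJ₂ hJ'
  grind [mul_self_zmod_two (A 0 1), mul_self_zmod_two (A 1 2), mul_self_zmod_two (A 2 0)]

theorem fits_V3_of_opposite_entries_ne_zero (hdet : ∀ A ∈ V, A.det = 0)
    (hdiag : ∀ r s, traceZeroDiagonal r s ∈ V) {J : Matrix (Fin 3) (Fin 3) (ZMod 2)} (hJ : J ∈ V)
    (hJ₀ : J 0 1 * J 1 0 ≠ 0) : Fits V V3 := by
  have hV {A} (hA : A ∈ V) :=
    identities_of_det_add_traceZeroDiagonal fun r s => hdet _ (V.add_mem hA (hdiag r s))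
  have hopp {A} (hA : A ∈ V) := opposite_entries_of_mul_eq_mul hJ₀ (hV hJ).2.1 (hV hJ).2.2.1
    (hV hA).2.1 (hV hA).2.2.1 (hV (V.add_mem hA hJ)).2.1 (hV (V.add_mem hA hJ)).2.2.1
  have hcycle (i j k l : Fin 3) (h : ∀ A ∈ V, A 0 1 + A 1 0 = 0 → A i j = A k l) :
      (∀ A ∈ V, A i j + A k l = 0) ∨ ∀ A ∈ V, A i j + A k l = A 0 1 + A 1 0 := by
    have := dual_eq_zero_or_eq_of_ker_le (f := entry V 0 1 + entry V 1 0)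
        (g := entry V i j + entry V k l) fun A hA => CharTwo.add_eq_zero.2 (h A A.2 hA)
    rwa [LinearMap.ext_iff, LinearMap.ext_iff, Subtype.forall, Subtype.forall] at this
  have hσ (σ : Equiv.Perm (Fin 3)) := fits_V3_of_constant_above_below (fun A hA => (hV hA).1) σ
  rcases hcycle 0 1 1 2 fun A hA h => ((hopp hA).2.2 h).1 with h₁ | h₁
  · refine hσ 1 fun A hA => ?_
    change A 0 1 = A 1 2 ∧ A 0 2 = A 1 2 ∧ A 1 0 = A 2 1 ∧ A 2 0 = A 2 1
    grind [mul_self_zmod_two (A 0 1), mul_self_zmod_two (A 1 0)]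
  rcases hcycle 1 2 2 0 fun A hA h => ((hopp hA).2.2 h).2 with h₂ | h₂
  · refine hσ (finRotate 3) fun A hA => ?_
    change A 1 2 = A 2 0 ∧ A 1 0 = A 2 0 ∧ A 2 1 = A 0 2 ∧ A 0 1 = A 0 2
    grind
  · refine hσ (finRotate 3)⁻¹ fun A hA => ?_
    change A 2 0 = A 0 1 ∧ A 2 1 = A 0 1 ∧ A 0 2 = A 1 0 ∧ A 1 2 = A 1 0
    grind

theorem fits_J3_or_fits_V3_of_entry_mul_entry_mul_entry_eq_zero (htr : ∀ A ∈ V, A.trace = 0)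
    (σ : Equiv.Perm (Fin 3)) (h₁₀ : entry V (σ 1) (σ 0) = 0) (h₂₁ : entry V (σ 2) (σ 1) = 0)
    (h₀₂ : entry V (σ 0) (σ 2) = 0)
    (h : ∀ A ∈ V, A (σ 0) (σ 1) * A (σ 1) (σ 2) * A (σ 2) (σ 0) = 0) :
    Fits V J3 ∨ Fits V V3 := by
  rcases eq_or_ne (entry V (σ 0) (σ 1)) 0 with h₀₁ | h₀₁
  · exact .inl (fits_J3_of_entry_eq_zero htr (finRotate 3 |>.trans σ) h₂₁ h₀₁ h₀₂)
  rcases eq_or_ne (entry V (σ 1) (σ 2)) 0 with h₁₂ | h₁₂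
  · exact .inl (fits_J3_of_entry_eq_zero htr ((finRotate 3)⁻¹.trans σ) h₀₂ h₁₂ h₁₀)
  rcases eq_or_ne (entry V (σ 2) (σ 0)) 0 with h₂₀ | h₂₀
  · exact .inl (fits_J3_of_entry_eq_zero htr σ h₁₀ h₂₀ h₂₁)
  have hsum := dual_add_eq_zero_of_mul_mul_eq_zero h₀₁ h₁₂ h₂₀ fun A => h A A.2
  rw [LinearMap.ext_iff, Subtype.forall] at hsum
  rw [entry_eq_zero_iff] at h₁₀ h₂₁ h₀₂
  refine .inr (.of_submatrix σ ((finRotate 3)⁻¹.trans σ) fun A hA => mem_V3_iff.2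
    ⟨h₀₂ A hA, h₁₀ A hA, h₂₁ A hA, ?_, ?_⟩)
  · exact (trace_fin_three _).symm.trans ((trace_submatrix_perm σ A).trans (htr A hA))
  · have hsumA : A (σ 0) (σ 1) + A (σ 1) (σ 2) + A (σ 2) (σ 0) = 0 := hsum A hA
    change A (σ 2) (σ 0) + A (σ 1) (σ 2) + A (σ 0) (σ 1) = 0
    rw [← hsumA]
    ring

theorem fits_J3_or_fits_V3 (hdet : ∀ A ∈ V, A.det = 0)
    (hdiag : ∀ r s, traceZeroDiagonal r s ∈ V) : Fits V J3 ∨ Fits V V3 := by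
  have hV {A} (hA : A ∈ V) :=
    identities_of_det_add_traceZeroDiagonal fun r s => hdet _ (V.add_mem hA (hdiag r s))
  by_cases hJ : ∃ J ∈ V, J 0 1 * J 1 0 ≠ 0
  · obtain ⟨J, hJ, hJ₀⟩ := hJ
    exact .inr (fits_V3_of_opposite_entries_ne_zero hdet hdiag hJ hJ₀)
  push Not at hJ
  have h₀₁ := dual_eq_zero_or_eq_zero_of_mul_eq_zero (f := entry V 0 1) (g := entry V 1 0)
    fun A => hJ A A.2
  have h₁₂ := dual_eq_zero_or_eq_zero_of_mul_eq_zero (f := entry V 1 2) (g := entry V 2 1)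
    fun A => (hV A.2).2.1.symm.trans (hJ A A.2)
  have h₀₂ := dual_eq_zero_or_eq_zero_of_mul_eq_zero (f := entry V 0 2) (g := entry V 2 0)
    fun A => (hV A.2).2.2.1.symm.trans (hJ A A.2)
  have hJ3 (σ : Equiv.Perm (Fin 3)) := fits_J3_of_entry_eq_zero (fun A hA => (hV hA).1) σ
  have hcyc (σ : Equiv.Perm (Fin 3)) :=
    fits_J3_or_fits_V3_of_entry_mul_entry_mul_entry_eq_zero (fun A hA => (hV hA).1) σ
  -- One of each two opposite entries vanishes; the other ones form a `3`-cycle or a triangle.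
  rcases h₀₁ with h₀₁ | h₁₀ <;> rcases h₁₂ with h₁₂ | h₂₁ <;> rcases h₀₂ with h₀₂ | h₂₀
  · exact .inl (hJ3 (Equiv.swap 0 2) h₁₂ h₀₂ h₀₁)
  · refine hcyc (Equiv.swap 0 2) h₁₂ h₀₁ h₂₀ fun A hA => ?_
    change A 2 1 * A 1 0 * A 0 2 = 0
    calc A 2 1 * A 1 0 * A 0 2 = A 0 2 * A 2 1 * A 1 0 := by ring
      _ = A 0 1 * A 1 2 * A 2 0 := (hV hA).2.2.2.symm
      _ = 0 := by rw [entry_eq_zero_iff.1 h₀₁ A hA, zero_mul, zero_mul]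
  · exact .inl (hJ3 (finRotate 3) h₂₁ h₀₁ h₀₂)
  · exact .inl (hJ3 (Equiv.swap 0 1) h₀₁ h₂₁ h₂₀)
  · exact .inl (hJ3 (finRotate 3)⁻¹ h₀₂ h₁₂ h₁₀)
  · exact .inl (hJ3 (Equiv.swap 1 2) h₂₀ h₁₀ h₁₂)
  · refine hcyc 1 h₁₀ h₂₁ h₀₂ fun A hA => ?_
    change A 0 1 * A 1 2 * A 2 0 = 0
    rw [(hV hA).2.2.2, entry_eq_zero_iff.1 h₁₀ A hA, mul_zero]
  · exact .inl (hJ3 1 h₁₀ h₂₀ h₂₁)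

end ContainingDiagonal

/-! ### Spaces with a nonzero entry away from two rows and two columns -/

section Frame

variable {K : Type*} [Field K] {n p : ℕ}

theorem schur_complement_minor_eq_zero {M : Matrix (Fin n) (Fin p) K} (hM : M.rank < 3)
    {i : Fin n} {j : Fin p} (hij : M i j = 1) (k k' : Fin n) (l l' : Fin p) :
    (M k l - M k j * M i l) * (M k' l' - M k' j * M i l') =
      (M k l' - M k j * M i l') * (M k' l - M k' j * M i l) := by
  have h := det_submatrix_eq_zero_of_rank_lt hM ![i, k, k'] ![j, l, l']
  simp only [det_fin_three, submatrix_apply, cons_val, cons_val_zero, cons_val_one, hij] at h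
  linear_combination h

/-- The matrix with entries `1` at `(z, z')` and `(o, o')` and zero entries elsewhere. -/
def unitPair (K : Type*) [Field K] (z o : Fin n) (z' o' : Fin p) : Matrix (Fin n) (Fin p) K :=
  single z z' 1 + single o o' 1

theorem unitPair_apply (z o : Fin n) (z' o' : Fin p) (i : Fin n) (j : Fin p) :
    unitPair K z o z' o' i j =
      (if z = i ∧ z' = j then 1 else 0) + if o = i ∧ o' = j then 1 else 0 := rfl

theorem unitPair_comm (z o : Fin n) (z' o' : Fin p) :
    unitPair K z o z' o' = unitPair K o z o' z' := add_comm _ _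

theorem eq_zero_of_minors_eq_zero {z o : Fin n} {z' o' : Fin p} (hzo : z ≠ o) (hzo' : z' ≠ o')
    {T : Matrix (Fin n) (Fin p) K} (hT : ∀ k k' l l', T k l * T k' l' = T k l' * T k' l)
    (hTE : ∀ k k' l l', (T + unitPair K z o z' o') k l * (T + unitPair K z o z' o') k' l' =
      (T + unitPair K z o z' o') k l' * (T + unitPair K z o z' o') k' l)
    {k : Fin n} {l : Fin p} (hkl : (k ≠ z ∧ k ≠ o) ∨ (l ≠ z' ∧ l ≠ o')) : T k l = 0 := by
  have hor : (k ≠ z ∧ l ≠ z') ∨ (k ≠ o ∧ l ≠ o') := by grind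
  -- A diagonal entry of the unit pair outside row `k` and column `l` singles out `T k l`.
  rcases hor with ⟨hk, hl⟩ | ⟨hk, hl⟩
  · have h := hTE k z l z'
    simp only [Matrix.add_apply, unitPair_apply] at h
    grind
  · have h := hTE k o l o'
    simp only [Matrix.add_apply, unitPair_apply] at h
    grind

/-- The `n × 3` matrix with columns the unit vectors at `z` and `o` and the vector `v`. -/
def frame (z o : Fin n) (v : Fin n → K) : Matrix (Fin n) (Fin 3) K :=
  of fun i => ![if i = z then 1 else 0, if i = o then 1 else 0, v i]

theorem rank_frame {z o i : Fin n} {v : Fin n → K} (hzo : z ≠ o) (hz : i ≠ z) (ho : i ≠ o)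
    (hv : v i ≠ 0) : (frame z o v).rank = 3 := by
  refine rank_eq_width_of_det_submatrix_ne_zero (r := ![z, o, i]) ?_
  rw [det_fin_three]
  simp [frame, hzo, hzo.symm, hz, ho, hv]

theorem frame_mul_mul_frame_transpose_apply (z o : Fin n) (z' o' : Fin p) (v : Fin n → K)
    (w : Fin p → K) (A : Matrix (Fin 3) (Fin 3) K) (k : Fin n) (l : Fin p) :
    (frame z o v * A * (frame z' o' w)ᵀ) k l =
      ((if k = z then A 0 0 else 0) + (if k = o then A 1 0 else 0) + v k * A 2 0) *
        (if l = z' then 1 else 0) +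
      ((if k = z then A 0 1 else 0) + (if k = o then A 1 1 else 0) + v k * A 2 1) *
        (if l = o' then 1 else 0) +
      ((if k = z then A 0 2 else 0) + (if k = o then A 1 2 else 0) + v k * A 2 2) * w l := by
  simp only [mul_apply, Fin.sum_univ_three, frame, transpose_apply, of_apply, cons_val, ite_mul,
    one_mul, zero_mul]

end Frame

section Diagonal

variable {n p : ℕ} {z o : Fin n} {z' o' : Fin p}

theorem frame_mul_traceZeroDiagonal_mul (v : Fin n → ZMod 2) (w : Fin p → ZMod 2) :
    frame z o v * traceZeroDiagonal 1 1 * (frame z' o' w)ᵀ = unitPair (ZMod 2) z o z' o' := by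
  ext k l
  rw [frame_mul_mul_frame_transpose_apply, unitPair_apply]
  simp [traceZeroDiagonal, eq_comm, ← ite_and, and_comm, ZModModule.add_self]

theorem exists_conj_traceZeroDiagonal_of_det {t₀ t₁ t₂ t₃ : ZMod 2} (h : t₀ * t₃ = t₁ * t₂)
    (h' : (t₀ + 1) * (t₃ + 1) = t₁ * t₂) : ∃ G H : Matrix (Fin 3) (Fin 3) (ZMod 2), G * H = 1 ∧
      G * traceZeroDiagonal 1 1 * H = traceZeroDiagonal 1 1 ∧
      G * traceZeroDiagonal 1 0 * H = !![t₀, t₁, 0; t₂, t₃, 0; 0, 0, 1] := by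
  obtain ⟨a, b, c, d, hdet, rfl, rfl, rfl, rfl⟩ : ∃ a b c d : ZMod 2,
      a * d + b * c = 1 ∧ a * d = t₀ ∧ a * b = t₁ ∧ c * d = t₂ ∧ c * b = t₃ := by
    revert t₀ t₁ t₂ t₃
    decide
  refine ⟨!![a, b, 0; c, d, 0; 0, 0, 1], !![d, b, 0; c, a, 0; 0, 0, 1], ?_, ?_, ?_⟩ <;>
    ext i j <;> fin_cases i <;> fin_cases j <;>
    simp [traceZeroDiagonal, mul_apply, Fin.sum_univ_three] <;> grind

theorem eq_frame_mul_mul_frame {N : Matrix (Fin n) (Fin p) (ZMod 2)} (hzo : z ≠ o) (hzo' : z' ≠ o')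
    (hN : N.rank < 3) (hNE : (N + unitPair (ZMod 2) z o z' o').rank < 3)
    {i : Fin n} {j : Fin p} (hiz : i ≠ z) (hio : i ≠ o) (hjz : j ≠ z') (hjo : j ≠ o')
    (hij : N i j ≠ 0) :
    ∃ t₀ t₁ t₂ t₃ : ZMod 2, t₀ * t₃ = t₁ * t₂ ∧ (t₀ + 1) * (t₃ + 1) = t₁ * t₂ ∧
      N = frame z o (fun k => N k j) * !![t₀, t₁, 0; t₂, t₃, 0; 0, 0, 1] *
        (frame z' o' (N i))ᵀ := by
  obtain ⟨E, hE⟩ : ∃ E, E = unitPair (ZMod 2) z o z' o' := ⟨_, rfl⟩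
  obtain ⟨T, hNT⟩ : ∃ T : Matrix (Fin n) (Fin p) (ZMod 2),
      ∀ k l, T k l = N k l - N k j * N i l := ⟨of fun k l => N k l - N k j * N i l, fun _ _ => rfl⟩
  have hij₁ := eq_one_of_ne_zero hij
  have hE₁ (l) : E i l = 0 := by simp [hE, unitPair_apply, hiz.symm, hio.symm]
  have hE₂ (k) : E k j = 0 := by simp [hE, unitPair_apply, hjz.symm, hjo.symm]
  have hT (k k' l l') : T k l * T k' l' = T k l' * T k' l := by
    simpa only [hNT] using schur_complement_minor_eq_zero hN hij₁ k k' l l'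
  have hTE (k k' l l') : (T + E) k l * (T + E) k' l' = (T + E) k l' * (T + E) k' l := by
    have := schur_complement_minor_eq_zero (hE ▸ hNE) (i := i) (j := j)
      (by simp [hij₁, hE₁]) k k' l l'
    simpa only [Matrix.add_apply, hE₁, hE₂, add_zero, hNT, sub_add_eq_add_sub] using this
  refine ⟨T z z', T z o', T o z', T o o', hT .., ?_, ?_⟩
  · have := hTE z o z' o'
    simpa [hE, unitPair_apply, hzo, hzo', hzo.symm, hzo'.symm] using this
  · ext k l
    have h₀ : (k ≠ z ∧ k ≠ o) ∨ (l ≠ z' ∧ l ≠ o') → T k l = 0 :=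
      eq_zero_of_minors_eq_zero hzo hzo' hT (hE ▸ hTE)
    have hkl : N k l = T k l + N k j * N i l := by rw [hNT, sub_add_cancel]
    rw [frame_mul_mul_frame_transpose_apply, hkl]
    simp only [of_apply, cons_val, cons_val_zero, cons_val_one, mul_zero, add_zero, mul_ite,
      mul_one, ite_self, zero_add, add_left_inj]
    grind

theorem fits_J3_or_fits_V3_of_mul_traceZeroDiagonal_mul_mem (hn : 3 ≤ n) (hp : 3 ≤ p)
    {V : Submodule (ZMod 2) (Matrix (Fin n) (Fin p) (ZMod 2))} (hV : ∀ M ∈ V, M.rank < 3)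
    {Y : Matrix (Fin n) (Fin 3) (ZMod 2)} {X : Matrix (Fin 3) (Fin p) (ZMod 2)}
    (hY : Y.rank = 3) (hX : X.rank = 3) (hdiag : ∀ r s, Y * traceZeroDiagonal r s * X ∈ V) :
    Fits V (embed n p hn hp J3) ∨ Fits V (embed n p hn hp V3) := by
  have hdet (A) (hA : A ∈ V.comap (sandwich Y X)) : A.det = 0 :=
    det_eq_zero_of_rank_lt ((rank_sandwich hY hX A).symm.trans_lt (hV _ hA))
  have hfac (M) (hM : M ∈ V) : ∃ A : Matrix (Fin 3) (Fin 3) (ZMod 2), M = Y * A * X :=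
    isRigid_traceZeroDiagonal.exists_eq_mul_mul (by norm_num) hV hY hX
      (by rintro _ ⟨r, s, rfl⟩; exact hdiag r s) hM
  exact (fits_J3_or_fits_V3 hdet hdiag).imp (fits_embed hY hX hfac) (fits_embed hY hX hfac)

theorem fits_J3_or_fits_V3_of_apply_ne_zero (hn : 3 ≤ n) (hp : 3 ≤ p) (hzo : z ≠ o)
    (hzo' : z' ≠ o') {V : Submodule (ZMod 2) (Matrix (Fin n) (Fin p) (ZMod 2))}
    (hV : ∀ M ∈ V, M.rank < 3) (hE : unitPair (ZMod 2) z o z' o' ∈ V)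
    {N : Matrix (Fin n) (Fin p) (ZMod 2)} (hN : N ∈ V)
    {i : Fin n} {j : Fin p} (hiz : i ≠ z) (hio : i ≠ o) (hjz : j ≠ z') (hjo : j ≠ o')
    (hij : N i j ≠ 0) :
    Fits V (embed n p hn hp J3) ∨ Fits V (embed n p hn hp V3) := by
  obtain ⟨t₀, t₁, t₂, t₃, ht, ht', hNt⟩ := eq_frame_mul_mul_frame hzo hzo' (hV N hN)
    (hV _ (V.add_mem hN hE)) hiz hio hjz hjo hij
  obtain ⟨G, H, hGH, hG₁, hG₀⟩ := exists_conj_traceZeroDiagonal_of_det ht ht'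
  have hG := (isUnit_iff_isUnit_det G).1 (.of_mul_eq_one _ hGH)
  have hH := (isUnit_iff_isUnit_det H).1 (.of_mul_eq_one_right _ hGH)
  let Y := frame z o fun k => N k j
  let X := (frame z' o' (N i))ᵀ
  have hY : (Y * G).rank = 3 := by
    rw [rank_mul_eq_left_of_isUnit_det _ _ hG, rank_frame hzo hiz hio hij]
  have hX : (H * X).rank = 3 := by
    rw [rank_mul_eq_right_of_isUnit_det _ _ hH, rank_transpose, rank_frame hzo' hjz hjo hij]
  have hYX (A : Matrix (Fin 3) (Fin 3) (ZMod 2)) : Y * G * A * (H * X) = Y * (G * A * H) * X := by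
    simp only [Matrix.mul_assoc]
  have h₁ : sandwich (Y * G) (H * X) (traceZeroDiagonal 1 1) ∈ V := by
    rwa [sandwich_apply, hYX, hG₁, frame_mul_traceZeroDiagonal_mul]
  have h₀ : sandwich (Y * G) (H * X) (traceZeroDiagonal 1 0) ∈ V := by
    rwa [sandwich_apply, hYX, hG₀, ← hNt]
  refine fits_J3_or_fits_V3_of_mul_traceZeroDiagonal_mul_mem hn hp hV hY hX fun r s => ?_
  have hrs : traceZeroDiagonal r s =
      s • traceZeroDiagonal 1 1 + (r + s) • traceZeroDiagonal 1 0 := by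
    revert r s
    decide
  rw [← sandwich_apply, hrs, map_add, map_smul, map_smul]
  exact V.add_mem (V.smul_mem _ h₁) (V.smul_mem _ h₀)

end Diagonal

/-! ### Spaces of matrices supported on two rows and two columns -/

section ThreeByThree

variable {V : Submodule (ZMod 2) (Matrix (Fin 3) (Fin 3) (ZMod 2))}

theorem mem_Mata3_iff {A : Matrix (Fin 3) (Fin 3) (ZMod 2)} :
    A ∈ Mata3 ↔ A 0 0 = 0 ∧ A 1 1 = 0 ∧ A 2 2 = 0 ∧ A 0 1 = A 1 0 ∧ A 0 2 = A 2 0 ∧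
      A 1 2 = A 2 1 := by
  change (Aᵀ = -A ∧ ∀ i : Fin 3, A i i = 0) ↔ _
  simp only [← ext_iff, transpose_apply, ZModModule.neg_eq_self, Fin.forall_fin_succ,
    Fin.succ_zero_eq_one, Fin.succ_one_eq_two, IsEmpty.forall_iff, and_true, true_and]
  grind

theorem exists_linear_relations_of_det_eq_zero (hdet : ∀ A ∈ V, A.det = 0)
    (h₂₂ : ∀ A ∈ V, A 2 2 = 0) (h₂₀ : ∀ A ∈ V, A 2 0 = A 1 2) (h₂₁ : ∀ A ∈ V, A 2 1 = A 0 2)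
    (hx : entry V 0 2 ≠ 0) (hy : entry V 1 2 ≠ 0) (hxy : entry V 0 2 + entry V 1 2 ≠ 0) :
    ∃ k l m : ZMod 2, ∀ A ∈ V, A 0 1 = k * A 0 2 ∧ A 1 0 = l * A 1 2 ∧
      A 0 0 + A 0 1 + A 1 0 + A 1 1 = m * (A 0 2 + A 1 2) := by
  have hcubic (A) (hA : A ∈ V) :
      A 0 2 * A 1 2 * (A 0 0 + A 1 1) + A 0 1 * A 1 2 + A 1 0 * A 0 2 = 0 := by
    have h := hdet A hA
    rw [det_fin_three, h₂₂ A hA, h₂₀ A hA, h₂₁ A hA] at h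
    grind [mul_self_zmod_two (A 0 2), mul_self_zmod_two (A 1 2)]
  -- Each relation comes from multiplying the cubic identity by one of `x`, `y` and `x + y`.
  obtain ⟨k, hk⟩ := dual_exists_eq_smul_add_of_mul_mul_eq_zero (f := entry V 0 1) hy hxy
    fun A => by
      change (A.1 0 1) * (A.1 1 2) * (A.1 0 2 + A.1 1 2) = 0
      grind [hcubic A.1 A.2, mul_self_zmod_two (A.1 0 2), mul_self_zmod_two (A.1 1 2)]
  obtain ⟨l, hl⟩ := dual_exists_eq_smul_add_of_mul_mul_eq_zero (f := entry V 1 0) hx hxy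
    fun A => by
      change (A.1 1 0) * (A.1 0 2) * (A.1 0 2 + A.1 1 2) = 0
      grind [hcubic A.1 A.2, mul_self_zmod_two (A.1 0 2), mul_self_zmod_two (A.1 1 2)]
  obtain ⟨m, hm⟩ := dual_exists_eq_smul_add_of_mul_mul_eq_zero
    (f := entry V 0 0 + entry V 0 1 + entry V 1 0 + entry V 1 1) hx hy fun A => by
      change (A.1 0 0 + A.1 0 1 + A.1 1 0 + A.1 1 1) * (A.1 0 2) * (A.1 1 2) = 0
      grind [hcubic A.1 A.2, mul_self_zmod_two (A.1 0 2), mul_self_zmod_two (A.1 1 2)]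
  rw [LinearMap.ext_iff, Subtype.forall] at hk hl hm
  refine ⟨k, l, m, fun A hA => ⟨?_, ?_, hm A hA⟩⟩
  · have : A 0 1 = k * (A 1 2 + (A 0 2 + A 1 2)) := hk A hA
    grind
  · have : A 1 0 = l * (A 0 2 + (A 0 2 + A 1 2)) := hl A hA
    grind

theorem fits_Mata3_or_fits_V3 (hdet : ∀ A ∈ V, A.det = 0) (h₂₂ : ∀ A ∈ V, A 2 2 = 0)
    (h₂₀ : ∀ A ∈ V, A 2 0 = A 1 2) (h₂₁ : ∀ A ∈ V, A 2 1 = A 0 2) (hx : entry V 0 2 ≠ 0)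
    (hy : entry V 1 2 ≠ 0) (hxy : entry V 0 2 + entry V 1 2 ≠ 0) :
    Fits V Mata3 ∨ Fits V V3 := by
  obtain ⟨k, l, m, h⟩ := exists_linear_relations_of_det_eq_zero hdet h₂₂ h₂₀ h₂₁ hx hy hxy
  -- Adding multiples of the last row to the others clears the entries `0 1` and `1 0`; the sum
  -- of the first two diagonal entries then becomes `(k + l + m) (x + y)`.
  rcases eq_or_ne (k + l + m) 0 with hklm | hklm
  · refine .inl ⟨!![0, 0, 1; 0, 1, l; 1, 0, k], !![0, 1, 0; 0, 0, 1; 1, 0, 0],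
      (isUnit_iff_isUnit_det _).2 (by simp [det_fin_three]),
      (isUnit_iff_isUnit_det _).2 (by simp [det_fin_three]), fun A hA => ?_⟩
    obtain ⟨h₀₁, h₁₀, hsum⟩ := h A hA
    rw [mem_Mata3_iff]
    simp only [mul_apply, Fin.sum_univ_three, of_apply, cons_val, h₂₂ A hA, h₂₀ A hA, h₂₁ A hA]
    grind
  · have hklm₁ := eq_one_of_ne_zero hklm
    refine .inr ⟨!![0, 1, l; 0, 1, l + 1; 1, 0, k], !![1, 1, 0; 0, 0, 1; 0, 1, 0],
      (isUnit_iff_isUnit_det _).2 (by simp [det_fin_three]),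
      (isUnit_iff_isUnit_det _).2 (by simp [det_fin_three]), fun A hA => ?_⟩
    obtain ⟨h₀₁, h₁₀, hsum⟩ := h A hA
    rw [mem_V3_iff]
    simp only [mul_apply, Fin.sum_univ_three, of_apply, cons_val, h₂₂ A hA, h₂₀ A hA, h₂₁ A hA]
    grind

end ThreeByThree

section Cross

variable {n p : ℕ} {z o i₀ : Fin n} {z' o' j₀ : Fin p}
  {V : Submodule (ZMod 2) (Matrix (Fin n) (Fin p) (ZMod 2))}

/-- `V` is a space of matrices of rank at most two that contains the matrix with entries `1` at
`(z, z')` and `(o, o')` and `0` elsewhere, and whose members are supported on the rows `z` and `o`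
and the columns `z'` and `o'`. -/
structure IsCross (z o : Fin n) (z' o' : Fin p)
    (V : Submodule (ZMod 2) (Matrix (Fin n) (Fin p) (ZMod 2))) : Prop where
  row_ne : z ≠ o
  col_ne : z' ≠ o'
  rank_lt : ∀ M ∈ V, M.rank < 3
  unitPair_mem : unitPair (ZMod 2) z o z' o' ∈ V
  apply_eq_zero : ∀ M ∈ V, ∀ i j, i ≠ z ∧ i ≠ o → j ≠ z' ∧ j ≠ o' → M i j = 0

theorem IsCross.swap (h : IsCross z o z' o' V) : IsCross o z o' z' V where
  row_ne := h.row_ne.symm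
  col_ne := h.col_ne.symm
  rank_lt := h.rank_lt
  unitPair_mem := by rw [unitPair_comm]; exact h.unitPair_mem
  apply_eq_zero M hM i j hi hj := h.apply_eq_zero M hM i j hi.symm hj.symm

theorem isUnit_transvection {R m : Type*} [CommRing R] [Fintype m] [DecidableEq m] {i j : m}
    (hij : i ≠ j) (c : R) : IsUnit (transvection i j c) := by
  rw [isUnit_iff_isUnit_det, det_transvection_of_ne i j hij]
  exact isUnit_one

theorem IsCross.map_transvection (h : IsCross z o z' o' V) :
    IsCross z o z' o' (V.map (sandwich (transvection o z 1) (transvection o' z' 1))) where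
  row_ne := h.row_ne
  col_ne := h.col_ne
  rank_lt := by
    rintro _ ⟨M, hM, rfl⟩
    exact (rank_sandwich_le _ _ _).trans_lt (h.rank_lt M hM)
  unitPair_mem := by
    refine ⟨_, h.unitPair_mem, ?_⟩
    have : single o z' 1 + single o z' 1 = (0 : Matrix (Fin n) (Fin p) (ZMod 2)) :=
      ZModModule.add_self _
    have hprod : transvection o z (1 : ZMod 2) * unitPair (ZMod 2) z o z' o' *
        transvection o' z' (1 : ZMod 2) =
        single z z' 1 + single o z' 1 + single o o' 1 + single o z' 1 := by
      simp [transvection, unitPair, Matrix.add_mul, Matrix.mul_add, h.row_ne, h.col_ne]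
    rw [sandwich_apply, hprod, unitPair]
    grind
  apply_eq_zero := by
    rintro _ ⟨M, hM, rfl⟩ i j hi hj
    simp [sandwich_apply, hi.2, hj.1, h.apply_eq_zero M hM i j hi hj]

theorem IsCross.cubic_identity (h : IsCross z o z' o' V) {i : Fin n} {j : Fin p}
    (hi : i ≠ z ∧ i ≠ o) (hj : j ≠ z' ∧ j ≠ o') {M : Matrix (Fin n) (Fin p) (ZMod 2)}
    (hM : M ∈ V) :
    M i z' * M o o' * M z j + M i z' * M z o' * M o j + M i o' * M o z' * M z j +
      M i o' * M z z' * M o j = 0 := by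
  have hdet := det_submatrix_eq_zero_of_rank_lt (h.rank_lt M hM) ![z, o, i] ![z', o', j]
  simp only [det_fin_three, submatrix_apply, cons_val, h.apply_eq_zero M hM i j hi hj] at hdet
  grind

theorem IsCross.bilinear_identity (h : IsCross z o z' o' V) {i : Fin n} {j : Fin p}
    (hi : i ≠ z ∧ i ≠ o) (hj : j ≠ z' ∧ j ≠ o') {M : Matrix (Fin n) (Fin p) (ZMod 2)}
    (hM : M ∈ V) : M i z' * M z j + M i o' * M o j = 0 := by
  -- The difference of the cubic identities for `M` and for the sum of `M` and the unit pair.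
  have h₁ := h.cubic_identity hi hj hM
  have h₂ := h.cubic_identity hi hj (V.add_mem hM h.unitPair_mem)
  simp only [Matrix.add_apply, unitPair_apply, h.row_ne, h.col_ne, h.row_ne.symm, h.col_ne.symm,
    hi.1.symm, hi.2.symm, hj.1.symm, hj.2.symm, and_self, and_true, and_false, if_true,
    if_false, add_zero, zero_add] at h₂
  grind

/-- The submatrix with rows `r` and columns `c`, as a linear map. -/
def submatrixLinearMap {K l m k q : Type*} [Field K] (r : k → l) (c : q → m) :
    Matrix l m K →ₗ[K] Matrix k q K where
  toFun M := M.submatrix r c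
  map_add' _ _ := rfl
  map_smul' _ _ := rfl

theorem fits_embed_of_eq_mul_submatrix_mul {hn : 3 ≤ n} {hp : 3 ≤ p}
    {W : Submodule (ZMod 2) (Matrix (Fin 3) (Fin 3) (ZMod 2))} {r : Fin 3 → Fin n}
    {c : Fin 3 → Fin p} {Y : Matrix (Fin n) (Fin 3) (ZMod 2)}
    {X : Matrix (Fin 3) (Fin p) (ZMod 2)} (hY : Y.rank = 3) (hX : X.rank = 3)
    (hV : ∀ M ∈ V, M = Y * M.submatrix r c * X) (hW : Fits (V.map (submatrixLinearMap r c)) W) :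
    Fits V (embed n p hn hp W) := by
  obtain ⟨P, Q, hP, hQ, h⟩ := hW
  refine fits_embed hY hX (fun M hM => ⟨_, hV M hM⟩) ⟨P, Q, hP, hQ, fun A hA => ?_⟩
  have hAsub : A = (Y * A * X).submatrix r c := sandwich_injective hY hX (hV _ hA)
  exact hAsub ▸ h _ ⟨_, hA, rfl⟩

theorem exists_extend_smul {m : ℕ} {z o i₀ : Fin m} (hi₀ : i₀ ≠ z ∧ i₀ ≠ o)
    {f g : Fin m → Module.Dual (ZMod 2) V}
    (hfg : ∀ i, i ≠ z ∧ i ≠ o → ∃ t : ZMod 2, f i = t • f i₀ ∧ g i = t • g i₀) :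
    ∃ v : Fin m → ZMod 2, v z = 0 ∧ v o = 0 ∧ v i₀ = 1 ∧
      ∀ i, i ≠ z ∧ i ≠ o → f i = v i • f i₀ ∧ g i = v i • g i₀ := by
  choose! t ht using hfg
  refine ⟨fun i => if i = i₀ then 1 else if i = z ∨ i = o then 0 else t i, by simp [hi₀.1.symm],
    by simp [hi₀.2.symm], by simp, fun i hi => ?_⟩
  rcases eq_or_ne i i₀ with rfl | hii₀
  · simp
  · simpa [hi.1, hi.2, hii₀] using ht i hi

theorem IsCross.fits_embed_of_proportional (h : IsCross z o z' o' V) (hn : 3 ≤ n) (hp : 3 ≤ p)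
    {W : Submodule (ZMod 2) (Matrix (Fin 3) (Fin 3) (ZMod 2))}
    (hi₀ : i₀ ≠ z ∧ i₀ ≠ o) (hj₀ : j₀ ≠ z' ∧ j₀ ≠ o')
    (hrow : ∀ i, i ≠ z ∧ i ≠ o → ∃ t : ZMod 2, entry V i z' = t • entry V i₀ z' ∧
      entry V i o' = t • entry V i₀ o')
    (hcol : ∀ j, j ≠ z' ∧ j ≠ o' → ∃ t : ZMod 2, entry V z j = t • entry V z j₀ ∧
      entry V o j = t • entry V o j₀)
    (hW : Fits (V.map (submatrixLinearMap ![z, o, i₀] ![z', o', j₀])) W) :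
    Fits V (embed n p hn hp W) := by
  obtain ⟨v, hvz, hvo, hvi, hv⟩ := exists_extend_smul hi₀ hrow
  obtain ⟨w, hwz, hwo, hwj, hw⟩ := exists_extend_smul hj₀ hcol
  simp only [LinearMap.ext_iff, Subtype.forall] at hv hw
  have hframe (M) (hM : M ∈ V) : M = frame z o v *
      M.submatrix ![z, o, i₀] ![z', o', j₀] * (frame z' o' w)ᵀ := by
    ext k l
    have hk : k ≠ z ∧ k ≠ o → M k z' = v k * M i₀ z' ∧ M k o' = v k * M i₀ o' :=
      fun hk => ⟨(hv k hk).1 M hM, (hv k hk).2 M hM⟩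
    have hl : l ≠ z' ∧ l ≠ o' → M z l = w l * M z j₀ ∧ M o l = w l * M o j₀ :=
      fun hl => ⟨(hw l hl).1 M hM, (hw l hl).2 M hM⟩
    rw [frame_mul_mul_frame_transpose_apply]
    simp only [submatrix_apply, cons_val]
    have := h.row_ne
    have := h.col_ne
    have := h.apply_eq_zero M hM
    grind
  refine fits_embed_of_eq_mul_submatrix_mul (rank_frame h.row_ne hi₀.1 hi₀.2 (hvi ▸ one_ne_zero)) ?_
    hframe hW
  rw [rank_transpose, rank_frame h.col_ne hj₀.1 hj₀.2 (hwj ▸ one_ne_zero)]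

theorem IsCross.entry_eq_zero_of_corner (h : IsCross z o z' o' V) (hi₀ : i₀ ≠ z ∧ i₀ ≠ o)
    (hj₀ : j₀ ≠ z' ∧ j₀ ≠ o') (hrow : entry V i₀ z' = 0) (hcol : entry V o j₀ = 0)
    (hrow' : entry V i₀ o' ≠ 0) (hcol' : entry V z j₀ ≠ 0) :
    (∀ i, i ≠ z ∧ i ≠ o → entry V i z' = 0) ∧ ∀ j, j ≠ z' ∧ j ≠ o' → entry V o j = 0 := by
  rw [entry_eq_zero_iff] at hrow hcol
  refine ⟨fun i hi => (dual_eq_zero_or_eq_zero_of_mul_eq_zero fun M => ?_).resolve_right hcol',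
    fun j hj => (dual_eq_zero_or_eq_zero_of_mul_eq_zero fun M => ?_).resolve_left hrow'⟩
  · change M.1 i z' * M.1 z j₀ = 0
    simpa [hcol M.1 M.2] using h.bilinear_identity hi hj₀ M.2
  · change M.1 i₀ o' * M.1 o j = 0
    simpa [hrow M.1 M.2] using h.bilinear_identity hi₀ hj M.2

theorem IsCross.fits_Rst_one_one (h : IsCross z o z' o' V)
    (hrow : ∀ i, i ≠ z ∧ i ≠ o → entry V i z' = 0) (hcol : ∀ j, j ≠ z' ∧ j ≠ o' → entry V o j = 0)
    (hoz : entry V o z' = 0) : Fits V (Rst (ZMod 2) n p 1 1) := by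
  simp only [entry_eq_zero_iff] at hrow hcol hoz
  refine fits_Rst_of_apply_eq_zero (r := ![z]) (c := ![o']) (Function.injective_of_subsingleton _)
    (Function.injective_of_subsingleton _) fun M hM i j hi hj => ?_
  have hi : i ≠ z := by simpa using hi
  have hj : j ≠ o' := by simpa using hj
  rcases eq_or_ne i o with rfl | hio <;> rcases eq_or_ne j z' with rfl | hjz
  · exact hoz M hM
  · exact hcol j ⟨hjz, hj⟩ M hM
  · exact hrow i ⟨hi, hio⟩ M hM
  · exact h.apply_eq_zero M hM i j ⟨hi, hio⟩ ⟨hjz, hj⟩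

theorem IsCross.fits_embed_J3 (h : IsCross z o z' o' V) (hn : 3 ≤ n) (hp : 3 ≤ p)
    (hi₀ : i₀ ≠ z ∧ i₀ ≠ o) (hj₀ : j₀ ≠ z' ∧ j₀ ≠ o')
    (hrow : ∀ i, i ≠ z ∧ i ≠ o → entry V i z' = 0) (hcol : ∀ j, j ≠ z' ∧ j ≠ o' → entry V o j = 0)
    (hoz : entry V o z' ≠ 0) (hrow' : entry V i₀ o' ≠ 0) (hcol' : entry V z j₀ ≠ 0) :
    Fits V (embed n p hn hp J3) := by
  have hcubic (i) (hi : i ≠ z ∧ i ≠ o) (j) (hj : j ≠ z' ∧ j ≠ o') (M : V) :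
      entry V i o' M * entry V o z' M * entry V z j M = 0 := by
    change M.1 i o' * M.1 o z' * M.1 z j = 0
    simpa [entry_eq_zero_iff.1 (hrow i hi) M.1 M.2, entry_eq_zero_iff.1 (hcol j hj) M.1 M.2]
      using h.cubic_identity hi hj M.2
  have hsum := dual_add_eq_zero_of_mul_mul_eq_zero hrow' hoz hcol' (hcubic i₀ hi₀ j₀ hj₀)
  refine h.fits_embed_of_proportional hn hp hi₀ hj₀ (fun i hi => ?_) (fun j hj => ?_) ?_
  · obtain ⟨t, ht⟩ :=
      dual_exists_eq_smul_add_of_mul_mul_eq_zero hoz hcol' (hcubic i hi j₀ hj₀)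
    refine ⟨t, by rw [hrow i hi, hrow i₀ hi₀, smul_zero], ?_⟩
    rw [ht, eq_of_add_eq_zero_of_zmod_two ((add_assoc _ _ _).symm.trans hsum)]
  · obtain ⟨t, ht⟩ := dual_exists_eq_smul_add_of_mul_mul_eq_zero hrow' hoz
      (f := entry V z j) fun M => by rw [← hcubic i₀ hi₀ j hj M]; ring
    refine ⟨t, ?_, by rw [hcol j hj, hcol j₀ hj₀, smul_zero]⟩
    rw [ht, eq_of_add_eq_zero_of_zmod_two hsum]
  · refine .of_submatrix 1 (finRotate 3)⁻¹ ?_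
    rintro _ ⟨M, hM, rfl⟩
    have hcolz : M o j₀ = 0 := entry_eq_zero_iff.1 (hcol j₀ hj₀) M hM
    have hrowz : M i₀ z' = 0 := entry_eq_zero_iff.1 (hrow i₀ hi₀) M hM
    have htr : M i₀ o' + M o z' + M z j₀ = 0 := LinearMap.congr_fun hsum ⟨M, hM⟩
    rw [mem_J3_iff, trace_fin_three]
    change M z j₀ + M o z' + M i₀ o' = 0 ∧ M o j₀ = 0 ∧ M i₀ j₀ = 0 ∧ M i₀ z' = 0
    exact ⟨by rw [← htr]; ring, hcolz, h.apply_eq_zero M hM _ _ hi₀ hj₀, hrowz⟩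

theorem IsCross.fits_of_corner (h : IsCross z o z' o' V) (hn : 3 ≤ n) (hp : 3 ≤ p)
    (hi₀ : i₀ ≠ z ∧ i₀ ≠ o) (hj₀ : j₀ ≠ z' ∧ j₀ ≠ o') (hrow : entry V i₀ z' = 0)
    (hcol : entry V o j₀ = 0) (hrow' : entry V i₀ o' ≠ 0) (hcol' : entry V z j₀ ≠ 0) :
    Fits V (Rst (ZMod 2) n p 1 1) ∨ Fits V (embed n p hn hp J3) := by
  obtain ⟨hrows, hcols⟩ := h.entry_eq_zero_of_corner hi₀ hj₀ hrow hcol hrow' hcol'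
  rcases eq_or_ne (entry V o z') 0 with hoz | hoz
  · exact .inl (h.fits_Rst_one_one hrows hcols hoz)
  · exact .inr (h.fits_embed_J3 hn hp hi₀ hj₀ hrows hcols hoz hrow' hcol')

theorem IsCross.fits_of_equal (h : IsCross z o z' o' V) (hn : 3 ≤ n) (hp : 3 ≤ p)
    (hi₀ : i₀ ≠ z ∧ i₀ ≠ o) (hj₀ : j₀ ≠ z' ∧ j₀ ≠ o') (hrow : entry V i₀ z' = entry V i₀ o')
    (hcol : entry V z j₀ = entry V o j₀) (hrow' : entry V i₀ o' ≠ 0) (hcol' : entry V z j₀ ≠ 0) :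
    Fits V (Rst (ZMod 2) n p 1 1) ∨ Fits V (embed n p hn hp J3) := by
  rw [LinearMap.ext_iff, Subtype.forall] at hrow hcol
  have hP := isUnit_transvection h.row_ne.symm (1 : ZMod 2)
  have hQ := isUnit_transvection h.col_ne.symm (1 : ZMod 2)
  refine (h.map_transvection.fits_of_corner hn hp hi₀ hj₀ ?_ ?_ ?_ ?_).imp
    (.of_map hP hQ) (.of_map hP hQ)
  · rw [entry_eq_zero_iff]
    rintro _ ⟨M, hM, rfl⟩
    have : M i₀ z' = M i₀ o' := hrow M hM
    simp [sandwich_apply, hi₀.2, this, ZModModule.add_self]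
  · rw [entry_eq_zero_iff]
    rintro _ ⟨M, hM, rfl⟩
    have : M z j₀ = M o j₀ := hcol M hM
    simp [sandwich_apply, hj₀.1, this, ZModModule.add_self]
  · refine mt (fun h₀ => ?_) hrow'
    rw [entry_eq_zero_iff] at h₀ ⊢
    intro M hM
    simpa [sandwich_apply, hi₀.2, h.col_ne.symm] using h₀ _ ⟨M, hM, rfl⟩
  · refine mt (fun h₀ => ?_) hcol'
    rw [entry_eq_zero_iff] at h₀ ⊢
    intro M hM
    simpa [sandwich_apply, hj₀.1, h.row_ne] using h₀ _ ⟨M, hM, rfl⟩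

theorem dual_exists_eq_smul_of_swapped {b₀ b₁ c₀ c₁ : Module.Dual (ZMod 2) V}
    (hbc : ∀ M, b₀ M * c₀ M + b₁ M * c₁ M = 0) (hc₀ : c₀ ≠ 0) (hc₁ : c₁ ≠ 0)
    (hc : c₀ + c₁ ≠ 0) : ∃ t : ZMod 2, b₀ = t • c₁ ∧ b₁ = t • c₀ := by
  by_cases hb : b₀ = 0 ∧ b₁ = 0
  · exact ⟨0, by simp [hb.1], by simp [hb.2]⟩
  · rcases dual_pair_cases_of_add_mul_eq_zero hbc (not_and_or.1 hb) (.inl hc₀) with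
      ⟨-, h⟩ | ⟨-, h⟩ | ⟨-, h⟩ | ⟨h₀, h₁, -⟩
    · exact absurd h hc₁
    · exact absurd h hc₀
    · exact absurd (h ▸ ZModModule.add_self c₀) hc
    · exact ⟨1, by simp [h₁], by simp [h₀]⟩

theorem IsCross.fits_of_swapped (h : IsCross z o z' o' V) (hn : 3 ≤ n) (hp : 3 ≤ p)
    (hi₀ : i₀ ≠ z ∧ i₀ ≠ o) (hj₀ : j₀ ≠ z' ∧ j₀ ≠ o') (h₀ : entry V z j₀ = entry V i₀ o')
    (h₁ : entry V o j₀ = entry V i₀ z') (hb₀ : entry V i₀ z' ≠ 0) (hb₁ : entry V i₀ o' ≠ 0)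
    (hb : entry V i₀ z' + entry V i₀ o' ≠ 0) :
    Fits V (embed n p hn hp Mata3) ∨ Fits V (embed n p hn hp V3) := by
  have hrow (i) (hi : i ≠ z ∧ i ≠ o) : ∃ t : ZMod 2, entry V i z' = t • entry V i₀ z' ∧
      entry V i o' = t • entry V i₀ o' := by
    rw [← h₀, ← h₁] at *
    exact dual_exists_eq_smul_of_swapped (fun M => h.bilinear_identity hi hj₀ M.2) hb₁ hb₀
      (add_comm (entry V o j₀) _ ▸ hb)
  have hcol (j) (hj : j ≠ z' ∧ j ≠ o') : ∃ t : ZMod 2, entry V z j = t • entry V z j₀ ∧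
      entry V o j = t • entry V o j₀ := by
    rw [h₀, h₁]
    refine dual_exists_eq_smul_of_swapped (fun M => ?_) hb₀ hb₁ hb
    change M.1 z j * M.1 i₀ z' + M.1 o j * M.1 i₀ o' = 0
    rw [← h.bilinear_identity hi₀ hj M.2]
    ring
  rw [LinearMap.ext_iff, Subtype.forall] at h₀ h₁
  refine Or.imp (h.fits_embed_of_proportional hn hp hi₀ hj₀ hrow hcol)
    (h.fits_embed_of_proportional hn hp hi₀ hj₀ hrow hcol) (fits_Mata3_or_fits_V3 ?_ ?_ ?_ ?_
      (mt (fun hx => ?_) hb₁) (mt (fun hy => ?_) hb₀) (mt (fun hxy => ?_) hb))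
  · rintro _ ⟨M, hM, rfl⟩
    exact det_submatrix_eq_zero_of_rank_lt (h.rank_lt M hM) _ _
  · rintro _ ⟨M, hM, rfl⟩
    exact h.apply_eq_zero M hM _ _ hi₀ hj₀
  · rintro _ ⟨M, hM, rfl⟩
    exact (h₁ M hM).symm
  · rintro _ ⟨M, hM, rfl⟩
    exact (h₀ M hM).symm
  · rw [entry_eq_zero_iff] at hx ⊢
    exact fun M hM => (h₀ M hM).symm.trans (hx _ ⟨M, hM, rfl⟩)
  · rw [entry_eq_zero_iff] at hy ⊢
    exact fun M hM => (h₁ M hM).symm.trans (hy _ ⟨M, hM, rfl⟩)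
  · rw [LinearMap.ext_iff, Subtype.forall] at hxy ⊢
    intro M hM
    have h₀₁ : M z j₀ + M o j₀ = 0 := hxy _ ⟨M, hM, rfl⟩
    have h₀M : M z j₀ = M i₀ o' := h₀ M hM
    have h₁M : M o j₀ = M i₀ z' := h₁ M hM
    change M i₀ z' + M i₀ o' = 0
    rw [← h₀₁, h₀M, h₁M, add_comm]

theorem IsCross.fits_Rst_two_zero (h : IsCross z o z' o' V)
    (hrow : ∀ i, i ≠ z ∧ i ≠ o → entry V i z' = 0 ∧ entry V i o' = 0) :
    Fits V (Rst (ZMod 2) n p 2 0) := by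
  simp only [entry_eq_zero_iff] at hrow
  refine fits_Rst_of_apply_eq_zero (r := ![z, o]) (c := ![])
    (List.nodup_ofFn.1 (by simpa using h.row_ne)) (Function.injective_of_subsingleton _)
    fun M hM i j hi _ => ?_
  have hi : i ≠ z ∧ i ≠ o := by simpa [and_comm] using hi
  by_cases hj : j ≠ z' ∧ j ≠ o'
  · exact h.apply_eq_zero M hM i j hi hj
  · rcases not_and_or.1 hj with hj | hj
    · exact not_not.1 hj ▸ (hrow i hi).1 M hM
    · exact not_not.1 hj ▸ (hrow i hi).2 M hM

theorem IsCross.fits_Rst_zero_two (h : IsCross z o z' o' V)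
    (hcol : ∀ j, j ≠ z' ∧ j ≠ o' → entry V z j = 0 ∧ entry V o j = 0) :
    Fits V (Rst (ZMod 2) n p 0 2) := by
  simp only [entry_eq_zero_iff] at hcol
  refine fits_Rst_of_apply_eq_zero (r := ![]) (c := ![z', o'])
    (Function.injective_of_subsingleton _) (List.nodup_ofFn.1 (by simpa using h.col_ne))
    fun M hM i j _ hj => ?_
  have hj : j ≠ z' ∧ j ≠ o' := by simpa [and_comm] using hj
  by_cases hi : i ≠ z ∧ i ≠ o
  · exact h.apply_eq_zero M hM i j hi hj
  · rcases not_and_or.1 hi with hi | hi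
    · exact not_not.1 hi ▸ (hcol j hj).1 M hM
    · exact not_not.1 hi ▸ (hcol j hj).2 M hM

theorem IsCross.exists_fits (h : IsCross z o z' o' V) (hn : 2 < n) (hp : 2 < p) :
    ∃ S ∈ maxList n p hn hp, Fits V S := by
  suffices Fits V (Rst (ZMod 2) n p 2 0) ∨ Fits V (Rst (ZMod 2) n p 0 2) ∨
      (Fits V (Rst (ZMod 2) n p 1 1) ∨ Fits V (embed n p hn hp J3)) ∨
      Fits V (embed n p hn hp Mata3) ∨ Fits V (embed n p hn hp V3) by
    simp only [maxList, List.mem_cons, List.not_mem_nil, or_false, exists_eq_or_imp,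
      exists_eq_left]
    tauto
  by_cases hrow : ∀ i, i ≠ z ∧ i ≠ o → entry V i z' = 0 ∧ entry V i o' = 0
  · exact .inl (h.fits_Rst_two_zero hrow)
  by_cases hcol : ∀ j, j ≠ z' ∧ j ≠ o' → entry V z j = 0 ∧ entry V o j = 0
  · exact .inr (.inl (h.fits_Rst_zero_two hcol))
  push Not at hrow hcol
  obtain ⟨i₀, hi₀, hb⟩ := hrow
  obtain ⟨j₀, hj₀, hc⟩ := hcol
  refine .inr (.inr ?_)
  rcases dual_pair_cases_of_add_mul_eq_zero (fun M => h.bilinear_identity hi₀ hj₀ M.2)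
    (not_and_or.1 (not_and.2 hb)) (not_and_or.1 (not_and.2 hc)) with
      ⟨h₀, h₁⟩ | ⟨h₁, h₀⟩ | ⟨h₀, h₁⟩ | ⟨h₀, h₁, hb₀, hb₁, hb₀₁⟩
  · exact .inl (h.fits_of_corner hn hp hi₀ hj₀ h₀ h₁ (hb h₀) fun hc₀ => hc hc₀ h₁)
  · exact .inl (h.swap.fits_of_corner hn hp hi₀.symm hj₀.symm h₁ h₀ (fun hb₀ => hb hb₀ h₁) (hc h₀))
  · exact .inl (h.fits_of_equal hn hp hi₀ hj₀ h₀ h₁ (fun hb₁ => hb (h₀.trans hb₁) hb₁)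
      fun hc₀ => hc hc₀ (h₁.symm.trans hc₀))
  · exact .inr (h.fits_of_swapped hn hp hi₀ hj₀ h₀ h₁ hb₀ hb₁ hb₀₁)

end Cross

section Classification

variable {n p : ℕ} {V : Submodule (ZMod 2) (Matrix (Fin n) (Fin p) (ZMod 2))}

theorem inc_two_mul_inc_two_transpose (hn : 2 ≤ n) (hp : 2 ≤ p) :
    inc (ZMod 2) n 2 * (inc (ZMod 2) p 2)ᵀ =
      unitPair (ZMod 2) (Fin.castLE hn 0) (Fin.castLE hn 1) (Fin.castLE hp 0)
        (Fin.castLE hp 1) := by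
  ext i j
  rw [mul_apply, Fin.sum_univ_two, unitPair_apply]
  simp only [inc_apply, transpose_apply, Fin.ext_iff, Fin.val_castLE, mul_ite, mul_one, mul_zero]
  grind

theorem exists_fits_of_unitPair_mem {z o : Fin n} {z' o' : Fin p} (hn : 2 < n) (hp : 2 < p)
    (hzo : z ≠ o) (hzo' : z' ≠ o') (hV : ∀ M ∈ V, M.rank < 3)
    (hE : unitPair (ZMod 2) z o z' o' ∈ V) : ∃ S ∈ maxList n p hn hp, Fits V S := by
  by_cases h : ∀ M ∈ V, ∀ i j, i ≠ z ∧ i ≠ o → j ≠ z' ∧ j ≠ o' → M i j = 0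
  · exact IsCross.exists_fits ⟨hzo, hzo', hV, hE, h⟩ hn hp
  · push Not at h
    obtain ⟨N, hN, i, j, hi, hj, hij⟩ := h
    rcases fits_J3_or_fits_V3_of_apply_ne_zero hn hp hzo hzo' hV hE hN hi.1 hi.2 hj.1 hj.2 hij
      with h | h
    · exact ⟨_, by simp [maxList], h⟩
    · exact ⟨_, by simp [maxList], h⟩

theorem exists_mem_maxList_fits (hn : 2 < n) (hp : 2 < p) (hV : ∀ M ∈ V, M.rank ≤ 2)
    {M : Matrix (Fin n) (Fin p) (ZMod 2)} (hM : M ∈ V) (hM₂ : M.rank = 2) :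
    ∃ S ∈ maxList n p hn hp, Fits V S := by
  obtain ⟨P, Q, hP, hQ, hE⟩ := exists_mul_mul_eq_inc_mul_inc_transpose M
  rw [hM₂, inc_two_mul_inc_two_transpose hn.le hp.le] at hE
  have hV' : ∀ N ∈ V.map (sandwich P Q), N.rank < 3 := by
    rintro _ ⟨N, hN, rfl⟩
    exact ((rank_sandwich_le P Q N).trans (hV N hN)).trans_lt (Nat.lt_succ_self 2)
  obtain ⟨S, hS, hfit⟩ :=
    exists_fits_of_unitPair_mem hn hp (by simp) (by simp) hV' ⟨M, hM, hE⟩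
  exact ⟨S, hS, hfit.of_map hP hQ⟩

end Classification

/-! ### Upper rank and equivalence -/

section UpperRank

variable {K : Type*} [Field K] {n p r : ℕ}

theorem urk_eq_iff {V : Submodule K (Matrix (Fin n) (Fin p) K)} :
    urk V = r ↔ (∀ M ∈ V, M.rank ≤ r) ∧ ∃ M ∈ V, M.rank = r := by
  have hbdd : BddAbove (rank '' (V : Set (Matrix (Fin n) (Fin p) K))) :=
    ⟨n, Set.forall_mem_image.2 fun M _ => M.rank_le_height⟩
  have hne : (rank '' (V : Set (Matrix (Fin n) (Fin p) K))).Nonempty := ⟨_, 0, V.zero_mem, rfl⟩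
  constructor
  · rintro rfl
    exact ⟨fun M hM => le_csSup hbdd ⟨M, hM, rfl⟩, Nat.sSup_mem hne hbdd⟩
  · rintro ⟨hle, M, hM, rfl⟩
    exact (csSup_le hne (Set.forall_mem_image.2 hle)).antisymm (le_csSup hbdd ⟨M, hM, rfl⟩)

theorem matEquiv_iff {V W : Submodule K (Matrix (Fin n) (Fin p) K)} :
    MatEquiv K V W ↔ ∃ P Q, IsUnit P ∧ IsUnit Q ∧ W = V.map (sandwich P Q) := by
  simp only [MatEquiv, SetLike.ext'_iff, Submodule.map_coe]
  rfl

theorem sandwich_surjective_of_isUnit {P : Matrix (Fin n) (Fin n) K} {Q : Matrix (Fin p) (Fin p) K}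
    (hP : IsUnit P) (hQ : IsUnit Q) : Function.Surjective (sandwich P Q) := by
  obtain ⟨P', hP'⟩ := hP.exists_right_inv
  obtain ⟨Q', hQ'⟩ := hQ.exists_left_inv
  refine fun M => ⟨P' * M * Q', ?_⟩
  calc P * (P' * M * Q') * Q = (P * P') * M * (Q' * Q) := by simp only [Matrix.mul_assoc]
    _ = M := by rw [hP', hQ', Matrix.one_mul, Matrix.mul_one]

theorem rank_sandwich_of_isUnit {P : Matrix (Fin n) (Fin n) K} {Q : Matrix (Fin p) (Fin p) K}
    (hP : IsUnit P) (hQ : IsUnit Q) (M : Matrix (Fin n) (Fin p) K) :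
    (sandwich P Q M).rank = M.rank :=
  rank_sandwich (by simpa using rank_of_isUnit P hP) (by simpa using rank_of_isUnit Q hQ) M

theorem matEquiv_of_fits {V S : Submodule (ZMod 2) (Matrix (Fin n) (Fin p) (ZMod 2))}
    (hV : IsMaxUrk2 V) (hS : urk S = 2) (h : Fits V S) : MatEquiv (ZMod 2) V S := by
  obtain ⟨P, Q, hP, hQ, hVS⟩ := h
  obtain ⟨M, hM, hM₂⟩ := (urk_eq_iff.1 hV.1).2
  have hurk : urk (S.comap (sandwich P Q)) = 2 := by
    refine urk_eq_iff.2 ⟨fun N hN => ?_, M, hVS M hM, hM₂⟩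
    rw [← rank_sandwich_of_isUnit hP hQ]
    exact (urk_eq_iff.1 hS).1 _ hN
  refine matEquiv_iff.2 ⟨P, Q, hP, hQ, ?_⟩
  rw [← hV.2 _ hurk hVS,
    Submodule.map_comap_eq_of_surjective (sandwich_surjective_of_isUnit hP hQ)]

theorem isMaxUrk2_of_forall_le {S : Submodule (ZMod 2) (Matrix (Fin n) (Fin p) (ZMod 2))}
    (hle : ∀ M ∈ S, M.rank ≤ 2) (hex : ∃ M ∈ S, 2 ≤ M.rank)
    (hmax : ∀ W : Submodule (ZMod 2) (Matrix (Fin n) (Fin p) (ZMod 2)),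
      (∀ M ∈ W, M.rank ≤ 2) → S ≤ W → W ≤ S) : IsMaxUrk2 S := by
  obtain ⟨M, hM, hM₂⟩ := hex
  exact ⟨urk_eq_iff.2 ⟨hle, M, hM, (hle M hM).antisymm hM₂⟩,
    fun W hW hSW => (hmax W (urk_eq_iff.1 hW).1 hSW).antisymm hSW⟩

end UpperRank

/-! ### The six spaces are maximal -/

section MaximalRst

variable {K : Type*} [Field K] {n p s t : ℕ}

theorem rank_le_of_mem_Rst {M : Matrix (Fin n) (Fin p) K} (hM : M ∈ Rst K n p s t) :
    M.rank ≤ s + t := by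
  have hfactor : M =
      fromCols (inc K n s) (of fun i (b : Fin t) =>
        if h : (i : ℕ) < s ∨ p ≤ b then 0 else M i ⟨b, by omega⟩) *
      fromRows (of fun (a : Fin s) j => if h : (a : ℕ) < n then M ⟨a, h⟩ j else 0)
        (inc K p t)ᵀ := by
    ext i j
    rw [fromCols_mul_fromRows, Matrix.add_apply, inc_mul_apply, mul_inc_transpose_apply]
    by_cases hi : (i : ℕ) < s
    · simp [hi]
    · by_cases hj : (j : ℕ) < t
      · simp [hi, hj]
      · simp [hi, hj, hM i j (by omega) (by omega)]
  rw [hfactor]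
  exact (rank_mul_le_left _ _).trans ((rank_le_card_width _).trans (by simp))

theorem exists_mem_Rst_le_rank (hn : s + t ≤ n) (hp : s + t ≤ p) :
    ∃ M ∈ Rst K n p s t, s + t ≤ M.rank := by
  refine ⟨of fun i j => if (i : ℕ) + j + 1 = s + t then 1 else 0, fun i j hi hj => ?_, ?_⟩
  · rw [of_apply, if_neg (by omega)]
  · suffices h : (of fun (i : Fin n) (j : Fin p) => if (i : ℕ) + j + 1 = s + t then (1 : K) else 0
        ).submatrix (Fin.castLE hn) (Fin.castLE hp ∘ Fin.rev) = 1 by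
      have hrank := card_le_rank_of_det_submatrix_ne_zero (by rw [h, det_one]; exact one_ne_zero)
      rwa [Fintype.card_fin] at hrank
    ext a b
    simp only [submatrix_apply, of_apply, one_apply, Function.comp_apply, Fin.val_castLE,
      Fin.val_rev, Fin.ext_iff]
    congr 1
    grind

theorem exists_injective_avoiding (h : s + t < n) (i : Fin n) :
    ∃ r : Fin t → Fin n, r.Injective ∧ ∀ a, s ≤ (r a : ℕ) ∧ r a ≠ i := by
  refine ⟨fun a => ⟨if s + a < (i : ℕ) then s + a else s + a + 1, by split_ifs <;> omega⟩,
    fun a b hab => ?_, fun a => ?_⟩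
  · grind
  · grind

/-- Prescribing the entries of `N` outside the forced zero block of `R(s, t)` suitably turns any
entry of that block into a minor of size `s + t + 1`. -/
theorem le_Rst_of_Rst_le {W : Submodule K (Matrix (Fin n) (Fin p) K)}
    (hn : s + t < n) (hp : s + t < p) (hW : ∀ M ∈ W, M.rank ≤ s + t) (hRW : Rst K n p s t ≤ W) :
    W ≤ Rst K n p s t := by
  intro N hN i j hi hj
  obtain ⟨r, hr, hri⟩ := exists_injective_avoiding hn i
  obtain ⟨c, hc, hcj⟩ := exists_injective_avoiding (add_comm s t ▸ hp) j
  obtain ⟨M, hM⟩ : ∃ M : Matrix (Fin n) (Fin p) K, M =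
      of fun (k : Fin n) (l : Fin p) => if h : (k : ℕ) < s then (if l = c ⟨k, h⟩ then 1 else 0)
        else if h : (l : ℕ) < t then (if k = r ⟨l, h⟩ then 1 else 0) else N k l := ⟨_, rfl⟩
  have hMW : M ∈ W := by
    rw [← Submodule.sub_mem_iff_left W hN]
    refine hRW fun k l hk hl => ?_
    rw [Matrix.sub_apply, hM, of_apply, dif_neg hk.not_gt, dif_neg hl.not_gt, sub_self]
  obtain ⟨ρ, hρ⟩ : ∃ ρ : Fin s ⊕ Fin t ⊕ Fin 1 → Fin n,
    ρ = Sum.elim (Fin.castLE (by omega)) (Sum.elim r fun _ => i) := ⟨_, rfl⟩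
  obtain ⟨γ, hγ⟩ : ∃ γ : Fin s ⊕ Fin t ⊕ Fin 1 → Fin p,
    γ = Sum.elim c (Sum.elim (Fin.castLE (by omega)) fun _ => j) := ⟨_, rfl⟩
  have hblocks : M.submatrix ρ γ = fromBlocks 1 0 (of fun k b => N (ρ (Sum.inr k)) (c b))
      (fromBlocks 1 (of fun a _ => N (r a) j) 0 (of fun _ _ => N i j)) := by
    ext (a | a | a) (b | b | b)
    all_goals simp only [hM, hρ, hγ, submatrix_apply, of_apply, fromBlocks_apply₁₁,
      fromBlocks_apply₁₂, fromBlocks_apply₂₁, fromBlocks_apply₂₂, Sum.elim_inl, Sum.elim_inr,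
      one_apply, Matrix.zero_apply]
    all_goals grind
  have hminor : (M.submatrix ρ γ).det = N i j := by
    rw [hblocks, det_fromBlocks_zero₁₂, det_fromBlocks_zero₂₁]
    simp
  by_contra hij
  have hrank := card_le_rank_of_det_submatrix_ne_zero (hminor.trans_ne hij)
  have := hW M hMW
  simp only [Fintype.card_sum, Fintype.card_fin] at hrank
  omega

end MaximalRst

theorem isMaxUrk2_Rst {n p s t : ℕ} (hst : s + t = 2) (hn : 2 < n) (hp : 2 < p) :
    IsMaxUrk2 (Rst (ZMod 2) n p s t) := by
  refine isMaxUrk2_of_forall_le (fun M hM => (rank_le_of_mem_Rst hM).trans_eq hst) ?_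
    fun W hW => le_Rst_of_Rst_le (by omega) (by omega) fun M hM => (hW M hM).trans_eq hst.symm
  obtain ⟨M, hM, hrank⟩ := exists_mem_Rst_le_rank (K := ZMod 2) (n := n) (p := p) (s := s) (t := t)
    (by omega) (by omega)
  exact ⟨M, hM, hst.symm.trans_le hrank⟩

section MaximalEmbed

variable {n p : ℕ} {hn : 3 ≤ n} {hp : 3 ≤ p}

theorem isMaxUrk2_embed {W : Submodule (ZMod 2) (Matrix (Fin 3) (Fin 3) (ZMod 2))}
    {R : Set (Matrix (Fin 3) (Fin 3) (ZMod 2))} (hR : IsRigid R)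
    {H : Matrix (Fin 3) (Fin 3) (ZMod 2)} (hH : IsUnit H) (hRW : ∀ B ∈ R, B * H ∈ W)
    (hle : ∀ A ∈ W, A.det = 0) (hex : ∃ A ∈ W, 2 ≤ A.rank)
    (hmax : ∀ A, (∀ B ∈ W, (A + B).det = 0) → A ∈ W) : IsMaxUrk2 (embed n p hn hp W) := by
  rw [embed_eq_map]
  have hY : (inc (ZMod 2) n 3).rank = 3 := rank_inc hn
  have hX : (inc (ZMod 2) p 3)ᵀ.rank = 3 := by rw [rank_transpose, rank_inc hp]
  refine isMaxUrk2_of_forall_le ?_ ?_ fun V hV hWV M hM => ?_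
  · rintro _ ⟨A, hA, rfl⟩
    exact (rank_sandwich_le _ _ A).trans (Nat.le_of_lt_succ (rank_lt_iff_det_eq_zero.2 (hle A hA)))
  · obtain ⟨A, hA, hA₂⟩ := hex
    exact ⟨_, ⟨A, hA, rfl⟩, hA₂.trans_eq (rank_sandwich hY hX A).symm⟩
  · obtain ⟨A, rfl⟩ := hR.exists_eq_mul_mul (V := V) (X := H * (inc (ZMod 2) p 3)ᵀ) (by norm_num)
      (fun M hM => Nat.lt_succ_of_le (hV M hM)) hY
      (by rw [rank_mul_eq_right_of_isUnit_det _ _ ((isUnit_iff_isUnit_det H).1 hH), hX])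
      (fun B hB => hWV ⟨B * H, hRW B hB, by simp only [sandwich_apply, Matrix.mul_assoc]⟩) hM
    refine ⟨A * H, hmax _ fun B hB => ?_, by simp only [sandwich_apply, Matrix.mul_assoc]⟩
    rw [← rank_lt_iff_det_eq_zero, ← rank_sandwich hY hX]
    refine Nat.lt_succ_of_le (hV _ (V.add_mem hM (hWV ⟨B, hB, rfl⟩)) |>.trans_eq' ?_)
    rw [map_add, sandwich_apply (A := A * H)]
    simp only [Matrix.mul_assoc]

theorem mem_J3_of_forall_det_add_eq_zero {A : Matrix (Fin 3) (Fin 3) (ZMod 2)}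
    (hA : ∀ B ∈ J3, (A + B).det = 0) : A ∈ J3 := by
  have hdet : ∀ x y u w : ZMod 2, x * (y * (x + y + A.trace) - w * A 2 1) -
      u * (A 1 0 * (x + y + A.trace) - w * A 2 0) = 0 := fun x y u w => by
    have h := hA !![x + A 0 0, u + A 0 1, A 0 2; 0, y + A 1 1, w + A 1 2;
      0, 0, x + A 0 0 + (y + A 1 1)] (mem_J3_iff.2 ⟨by
        simp only [trace_fin_three, of_apply, cons_val]; grind, rfl, rfl, rfl⟩)
    rw [det_fin_three] at h
    simp only [Matrix.add_apply, of_apply, cons_val] at h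
    rw [trace_fin_three]
    grind
  have htrace : A.trace = 0 := by grind [hdet 1 1 0 0]
  refine mem_J3_iff.2 ⟨htrace, ?_, ?_, ?_⟩
  · grind [hdet 1 0 1 0]
  · grind [hdet 0 0 1 1]
  · grind [hdet 1 0 0 1]

theorem det_eq_zero_of_mem_J3 {A : Matrix (Fin 3) (Fin 3) (ZMod 2)} (hA : A ∈ J3) :
    A.det = 0 := by
  obtain ⟨htrace, h₁₀, h₂₀, h₂₁⟩ := mem_J3_iff.1 hA
  rw [trace_fin_three] at htrace
  rw [det_fin_three, h₁₀, h₂₀, h₂₁]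
  grind [mul_self_zmod_two (A 0 0), mul_self_zmod_two (A 1 1)]

theorem traceZeroDiagonal_mem_J3 (r s : ZMod 2) : traceZeroDiagonal r s ∈ J3 := by
  refine mem_J3_iff.2 ⟨?_, rfl, rfl, rfl⟩
  simp only [traceZeroDiagonal, trace_fin_three, of_apply, cons_val]
  exact ZModModule.add_self _

theorem two_le_rank_traceZeroDiagonal : 2 ≤ (traceZeroDiagonal 1 1).rank :=
  card_le_rank_of_det_submatrix_ne_zero (r := ![0, 1]) (c := ![0, 1])
    (by rw [det_fin_two]; simp [traceZeroDiagonal])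

theorem isMaxUrk2_embed_J3 : IsMaxUrk2 (embed n p hn hp J3) := by
  refine isMaxUrk2_embed isRigid_traceZeroDiagonal isUnit_one ?_
    (fun A => det_eq_zero_of_mem_J3) ⟨_, traceZeroDiagonal_mem_J3 1 1, ?_⟩
    fun A => mem_J3_of_forall_det_add_eq_zero
  · rintro _ ⟨r, s, rfl⟩
    rw [Matrix.mul_one]
    exact traceZeroDiagonal_mem_J3 r s
  · exact two_le_rank_traceZeroDiagonal

theorem det_eq_zero_of_mem_Mata3 {A : Matrix (Fin 3) (Fin 3) (ZMod 2)} (hA : A ∈ Mata3) :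
    A.det = 0 := by
  obtain ⟨h₀₀, h₁₁, h₂₂, h₀₁, h₀₂, h₁₂⟩ := mem_Mata3_iff.1 hA
  rw [det_fin_three, h₀₀, h₁₁, h₂₂, h₀₁, h₀₂, h₁₂]
  grind

theorem alternating_mem_Mata3 (x y z : ZMod 2) : alternating x y z ∈ Mata3 :=
  mem_Mata3_iff.2 ⟨rfl, rfl, rfl, rfl, rfl, rfl⟩

theorem mem_Mata3_of_forall_det_add_eq_zero {A : Matrix (Fin 3) (Fin 3) (ZMod 2)}
    (hA : ∀ B ∈ Mata3, (A + B).det = 0) : A ∈ Mata3 := by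
  have hdet : ∀ u v w : ZMod 2, A 0 0 * (A 1 1 * A 2 2 - w * (A 1 2 + A 2 1 + w)) -
      u * ((A 0 1 + A 1 0 + u) * A 2 2 - w * (A 0 2 + A 2 0 + v)) +
      v * ((A 0 1 + A 1 0 + u) * (A 1 2 + A 2 1 + w) - A 1 1 * (A 0 2 + A 2 0 + v)) = 0 :=
    fun u v w => by
      have h := hA _ (alternating_mem_Mata3 (u + A 0 1) (v + A 0 2) (w + A 1 2))
      rw [det_fin_three] at h
      simp only [alternating, Matrix.add_apply, of_apply, cons_val] at h
      grind
  have h₀₂ : A 0 2 = A 2 0 := by grind [hdet 1 0 1, hdet 1 0 0, hdet 0 0 1, hdet 0 0 0]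
  have h₀₁ : A 0 1 = A 1 0 := by grind [hdet 0 1 1, hdet 0 1 0, hdet 0 0 1, hdet 0 0 0]
  have h₁₂ : A 1 2 = A 2 1 := by grind [hdet 1 1 0, hdet 1 0 0, hdet 0 1 0, hdet 0 0 0]
  refine mem_Mata3_iff.2 ⟨?_, ?_, ?_, h₀₁, h₀₂, h₁₂⟩
  · grind [hdet 0 0 1, hdet 0 0 0]
  · grind [hdet 0 1 0, hdet 0 0 0]
  · grind [hdet 1 0 0, hdet 0 0 0]

theorem isMaxUrk2_embed_Mata3 : IsMaxUrk2 (embed n p hn hp Mata3) := by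
  refine isMaxUrk2_embed isRigid_alternating isUnit_one ?_
    (fun A => det_eq_zero_of_mem_Mata3) ⟨_, alternating_mem_Mata3 1 0 0, ?_⟩
    fun A => mem_Mata3_of_forall_det_add_eq_zero
  · rintro _ ⟨x, y, z, rfl⟩
    rw [Matrix.mul_one]
    exact alternating_mem_Mata3 x y z
  · exact card_le_rank_of_det_submatrix_ne_zero (r := ![0, 1]) (c := ![0, 1])
      (by rw [det_fin_two]; simp [alternating])

theorem det_eq_zero_of_mem_V3 {A : Matrix (Fin 3) (Fin 3) (ZMod 2)} (hA : A ∈ V3) :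
    A.det = 0 := by
  obtain ⟨h₀₀, h₁₁, h₂₂, h, h'⟩ := mem_V3_iff.1 hA
  rw [det_fin_three, h₀₀, h₁₁, h₂₂]
  grind [mul_self_zmod_two (A 0 1), mul_self_zmod_two (A 1 2), mul_self_zmod_two (A 1 0),
    mul_self_zmod_two (A 0 2)]

theorem mem_V3_of_forall_det_add_eq_zero {A : Matrix (Fin 3) (Fin 3) (ZMod 2)}
    (hA : ∀ B ∈ V3, (A + B).det = 0) : A ∈ V3 := by
  have hdet : ∀ u v w r : ZMod 2,
      A 0 0 * (A 1 1 * A 2 2 - r * (v + w + (A 2 1 + A 1 0 + A 0 2))) -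
      u * (w * A 2 2 - r * (u + r + (A 0 1 + A 1 2 + A 2 0))) +
      v * (w * (v + w + (A 2 1 + A 1 0 + A 0 2)) -
        A 1 1 * (u + r + (A 0 1 + A 1 2 + A 2 0))) = 0 := fun u v w r => by
    have h := hA !![0, u + A 0 1, v + A 0 2; w + A 1 0, 0, r + A 1 2;
      u + A 0 1 + (r + A 1 2), v + A 0 2 + (w + A 1 0), 0] (mem_V3_iff.2 ⟨rfl, rfl, rfl, by
        simp only [of_apply, cons_val]; grind, by simp only [of_apply, cons_val]; grind⟩)
    rw [det_fin_three] at h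
    simp only [Matrix.add_apply, of_apply, cons_val] at h
    grind
  have h₀₀ : A 0 0 = 0 := by grind [hdet 0 0 1 1, hdet 0 0 1 0, hdet 0 0 0 1, hdet 0 0 0 0]
  refine mem_V3_iff.2 ⟨h₀₀, ?_, ?_, ?_, ?_⟩
  · grind [hdet 1 1 0 0, hdet 1 0 0 0, hdet 0 1 0 0, hdet 0 0 0 0]
  · grind [hdet 1 0 1 0, hdet 1 0 0 0, hdet 0 0 1 0, hdet 0 0 0 0]
  · grind [hdet 1 0 0 1, hdet 1 0 0 0, hdet 0 0 0 1, hdet 0 0 0 0]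
  · grind [hdet 0 1 1 0, hdet 0 1 0 0, hdet 0 0 1 0, hdet 0 0 0 0]

/-- The permutation matrix that brings the trace-zero diagonal matrices into `V3`. -/
def cyclic : Matrix (Fin 3) (Fin 3) (ZMod 2) := !![0, 1, 0; 0, 0, 1; 1, 0, 0]

theorem isUnit_cyclic : IsUnit cyclic := by
  rw [isUnit_iff_isUnit_det, det_fin_three]
  simp [cyclic]

theorem traceZeroDiagonal_mul_cyclic_mem_V3 (r s : ZMod 2) :
    traceZeroDiagonal r s * cyclic ∈ V3 := by
  rw [mem_V3_iff]
  simp only [traceZeroDiagonal, cyclic, mul_apply, Fin.sum_univ_three, of_apply, cons_val]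
  grind

theorem isMaxUrk2_embed_V3 : IsMaxUrk2 (embed n p hn hp V3) := by
  refine isMaxUrk2_embed isRigid_traceZeroDiagonal isUnit_cyclic ?_
    (fun A => det_eq_zero_of_mem_V3) ⟨_, traceZeroDiagonal_mul_cyclic_mem_V3 1 1, ?_⟩
    fun A => mem_V3_of_forall_det_add_eq_zero
  · rintro _ ⟨r, s, rfl⟩
    exact traceZeroDiagonal_mul_cyclic_mem_V3 r s
  · rw [rank_mul_eq_left_of_isUnit_det _ _ ((isUnit_iff_isUnit_det _).1 isUnit_cyclic)]
    exact two_le_rank_traceZeroDiagonal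

theorem isMaxUrk2_of_mem_maxList {S : Submodule (ZMod 2) (Matrix (Fin n) (Fin p) (ZMod 2))}
    (hS : S ∈ maxList n p hn hp) : IsMaxUrk2 S := by
  simp only [maxList, List.mem_cons, List.not_mem_nil, or_false] at hS
  rcases hS with rfl | rfl | rfl | rfl | rfl | rfl
  exacts [isMaxUrk2_Rst rfl hn hp, isMaxUrk2_Rst rfl hn hp, isMaxUrk2_Rst rfl hn hp,
    isMaxUrk2_embed_J3, isMaxUrk2_embed_Mata3, isMaxUrk2_embed_V3]

end MaximalEmbed

/-! ### The six spaces are pairwise inequivalent -/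

section Invariants

variable {K : Type*} [Field K] {n p s t : ℕ}

/-- The vectors `u` such that `V` contains every matrix whose columns are all multiples of `u`.
Its dimension is an invariant of `V` under equivalence. -/
def columnLines (V : Submodule K (Matrix (Fin n) (Fin p) K)) : Submodule K (Fin n → K) where
  carrier := {u | ∀ q : Fin p → K, vecMulVec u q ∈ V}
  add_mem' {u v} hu hv q := by
    rw [add_vecMulVec]
    exact V.add_mem (hu q) (hv q)
  zero_mem' q := by
    rw [zero_vecMulVec]
    exact V.zero_mem
  smul_mem' c u hu q := by
    rw [smul_vecMulVec]
    exact V.smul_mem c (hu q)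

theorem columnLines_map_sandwich_le {Y : Matrix (Fin n) (Fin s) K} {X : Matrix (Fin t) (Fin p) K}
    (hY : Y.rank = s) (hX : X.rank = t) (ht : 0 < t) (V : Submodule K (Matrix (Fin s) (Fin t) K)) :
    columnLines (V.map (sandwich Y X)) ≤ (columnLines V).map Y.mulVecLin := by
  intro u hu
  obtain ⟨Y', hY'⟩ := exists_mul_eq_one_of_rank_eq_width hY
  obtain ⟨X', hX'⟩ := exists_mul_eq_one_of_rank_eq_width (rank_transpose X |>.trans hX)
  have hXX' : X * X'ᵀ = 1 := by
    rw [← transpose_one, ← hX', transpose_mul, transpose_transpose]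
  have hpre : ∀ q : Fin t → K, ∃ A ∈ V, Y * A = vecMulVec u q := by
    intro q
    obtain ⟨A, hA, hAu⟩ := hu (q ᵥ* X)
    refine ⟨A, hA, ?_⟩
    calc Y * A = sandwich Y X A * X'ᵀ := by
          rw [sandwich_apply, Matrix.mul_assoc, hXX', Matrix.mul_one]
      _ = vecMulVec u q := by
          rw [hAu, vecMulVec_mul, vecMul_vecMul, hXX', vecMul_one]
  have hY'A : ∀ {A : Matrix (Fin s) (Fin t) K} {q : Fin t → K}, Y * A = vecMulVec u q →
      A = vecMulVec (Y' *ᵥ u) q := by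
    intro A q hA
    rw [← mul_vecMulVec, ← hA, ← Matrix.mul_assoc, hY', Matrix.one_mul]
  refine ⟨Y' *ᵥ u, fun q => ?_, ?_⟩
  · obtain ⟨A, hAV, hA⟩ := hpre q
    exact hY'A hA ▸ hAV
  · obtain ⟨A, -, hA⟩ := hpre 1
    have hu' : vecMulVec (Y *ᵥ (Y' *ᵥ u)) 1 = vecMulVec u (1 : Fin t → K) := by
      rw [← mul_vecMulVec, ← hY'A hA, hA]
    ext i
    simpa [vecMulVec_apply] using congr_fun₂ hu' i ⟨0, ht⟩

theorem finrank_columnLines_map_sandwich_le {Y : Matrix (Fin n) (Fin s) K}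
    {X : Matrix (Fin t) (Fin p) K} (hY : Y.rank = s) (hX : X.rank = t) (ht : 0 < t)
    (V : Submodule K (Matrix (Fin s) (Fin t) K)) :
    Module.finrank K (columnLines (V.map (sandwich Y X))) ≤ Module.finrank K (columnLines V) :=
  (Submodule.finrank_mono (columnLines_map_sandwich_le hY hX ht V)).trans
    (Submodule.finrank_map_le _ _)

theorem finrank_map_sandwich {Y : Matrix (Fin n) (Fin s) K} {X : Matrix (Fin t) (Fin p) K}
    (hY : Y.rank = s) (hX : X.rank = t) (V : Submodule K (Matrix (Fin s) (Fin t) K)) :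
    Module.finrank K (V.map (sandwich Y X)) = Module.finrank K V :=
  (V.equivMapOfInjective _ (sandwich_injective hY hX)).finrank_eq.symm

variable {V W : Submodule K (Matrix (Fin n) (Fin p) K)}

theorem MatEquiv.symm (h : MatEquiv K V W) : MatEquiv K W V := by
  obtain ⟨P, Q, hP, hQ, rfl⟩ := matEquiv_iff.1 h
  obtain ⟨P', hP'⟩ := hP.exists_left_inv
  obtain ⟨Q', hQ'⟩ := hQ.exists_right_inv
  refine matEquiv_iff.2 ⟨P', Q', .of_mul_eq_one _ hP', .of_mul_eq_one_right _ hQ', ?_⟩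
  have hinv : sandwich P' Q' ∘ₗ sandwich P Q = .id := by
    ext1 M
    calc P' * (P * M * Q) * Q' = (P' * P) * M * (Q * Q') := by simp only [Matrix.mul_assoc]
      _ = M := by rw [hP', hQ', Matrix.one_mul, Matrix.mul_one]
  rw [← Submodule.map_comp, hinv, Submodule.map_id]

theorem MatEquiv.finrank_eq (h : MatEquiv K V W) : Module.finrank K V = Module.finrank K W := by
  obtain ⟨P, Q, hP, hQ, rfl⟩ := matEquiv_iff.1 h
  exact (finrank_map_sandwich (by simpa using rank_of_isUnit P hP)
    (by simpa using rank_of_isUnit Q hQ) V).symm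

theorem MatEquiv.finrank_columnLines_eq (hp : 0 < p) (h : MatEquiv K V W) :
    Module.finrank K (columnLines V) = Module.finrank K (columnLines W) := by
  have hle : ∀ {V W : Submodule K (Matrix (Fin n) (Fin p) K)}, MatEquiv K V W →
      Module.finrank K (columnLines W) ≤ Module.finrank K (columnLines V) := by
    intro V W h
    obtain ⟨P, Q, hP, hQ, rfl⟩ := matEquiv_iff.1 h
    exact finrank_columnLines_map_sandwich_le (by simpa using rank_of_isUnit P hP)
      (by simpa using rank_of_isUnit Q hQ) hp V
  exact (hle h.symm).antisymm (hle h)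

theorem finrank_columnLines_Rst (hs : s ≤ n) (ht : t < p) :
    Module.finrank K (columnLines (Rst K n p s t)) = s := by
  suffices h : columnLines (Rst K n p s t) = LinearMap.range (inc K n s).mulVecLin by
    rw [h]
    exact rank_inc hs
  ext u
  constructor
  · intro hu
    refine ⟨u ∘ Fin.castLE hs, funext fun i => ?_⟩
    rw [mulVecLin_apply, inc_mulVec_apply]
    split_ifs with hi
    · rfl
    · simpa [vecMulVec_apply] using (hu 1 i ⟨t, ht⟩ (not_lt.1 hi) le_rfl).symm
  · rintro ⟨v, rfl⟩ q i j hi -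
    rw [mulVecLin_apply, ← mul_vecMulVec, inc_mul_apply, dif_neg hi.not_gt]

theorem mul_le_finrank_Rst (ht : t ≤ p) : n * t ≤ Module.finrank K (Rst K n p 0 t) := by
  have hle : (⊤ : Submodule K (Matrix (Fin n) (Fin t) K)).map (sandwich 1 (inc K p t)ᵀ) ≤
      Rst K n p 0 t := by
    rintro _ ⟨A, -, rfl⟩ i j - hj
    rw [sandwich_apply, mul_inc_transpose_apply, dif_neg hj.not_gt]
  refine le_of_eq_of_le ?_ (Submodule.finrank_mono hle)
  rw [finrank_map_sandwich (by simp) (by rw [rank_transpose, rank_inc ht])]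
  simp [Module.finrank_matrix]

end Invariants

section CornerInvariants

variable {n p : ℕ} {hn : 2 < n} {hp : 2 < p}
  {W : Submodule (ZMod 2) (Matrix (Fin 3) (Fin 3) (ZMod 2))}

theorem finrank_embed :
    Module.finrank (ZMod 2) (embed n p hn hp W) = Module.finrank (ZMod 2) W := by
  rw [embed_eq_map]
  exact finrank_map_sandwich (rank_inc hn) (by rw [rank_transpose, rank_inc hp]) W

theorem finrank_columnLines_embed (hW : columnLines W = ⊥) :
    Module.finrank (ZMod 2) (columnLines (embed n p hn hp W)) = 0 := by
  rw [embed_eq_map]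
  refine Nat.le_zero.1 ((finrank_columnLines_map_sandwich_le (rank_inc hn)
    (by rw [rank_transpose, rank_inc hp]) (by decide) W).trans_eq ?_)
  rw [hW, finrank_bot]

theorem columnLines_J3 : columnLines J3 = ⊥ := by
  refine (Submodule.eq_bot_iff _).2 fun u hu => ?_
  have h := mem_J3_iff.1 (hu ![1, 0, 0])
  simpa [trace_fin_three, vecMulVec_apply, funext_iff, Fin.forall_fin_succ] using h

theorem columnLines_Mata3 : columnLines Mata3 = ⊥ :=
  (Submodule.eq_bot_iff _).2 fun u hu =>
    funext fun i => by simpa [vecMulVec_apply] using (hu 1).2 i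

theorem columnLines_V3 : columnLines V3 = ⊥ :=
  (Submodule.eq_bot_iff _).2 fun u hu =>
    funext fun i => by simpa [vecMulVec_apply] using (hu 1).1 i

theorem finrank_eq_of_mem_iff {P : Matrix (Fin 3) (Fin 3) (ZMod 2) → Prop} [DecidablePred P]
    {d : ℕ} (hP : ∀ {A}, A ∈ W ↔ P A) (hd : (Finset.univ.filter P).card = 2 ^ d) :
    Module.finrank (ZMod 2) W = d := by
  have hcard : Nat.card W = 2 ^ d := by
    rw [← hd, ← Fintype.card_subtype, ← Nat.card_eq_fintype_card]
    exact Nat.card_congr (Equiv.subtypeEquivRight fun _ => hP)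
  rwa [Module.natCard_eq_pow_finrank (K := ZMod 2), Nat.card_zmod,
    Nat.pow_right_inj one_lt_two] at hcard

theorem finrank_J3 : Module.finrank (ZMod 2) J3 = 5 :=
  finrank_eq_of_mem_iff mem_J3_iff (by decide +kernel)

theorem finrank_Mata3 : Module.finrank (ZMod 2) Mata3 = 3 :=
  finrank_eq_of_mem_iff mem_Mata3_iff (by decide +kernel)

theorem finrank_V3 : Module.finrank (ZMod 2) V3 = 4 :=
  finrank_eq_of_mem_iff mem_V3_iff (by decide +kernel)

theorem not_matEquiv_of_invariants_ne
    {V V' : Submodule (ZMod 2) (Matrix (Fin n) (Fin p) (ZMod 2))} (hp : 0 < p)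
    (h : Module.finrank (ZMod 2) (columnLines V) ≠ Module.finrank (ZMod 2) (columnLines V') ∨
      Module.finrank (ZMod 2) V ≠ Module.finrank (ZMod 2) V') : ¬ MatEquiv (ZMod 2) V V' :=
  fun hVV' => h.elim (· (hVV'.finrank_columnLines_eq hp)) (· hVV'.finrank_eq)

theorem pairwise_not_matEquiv_maxList :
    (maxList n p hn hp).Pairwise fun V W => ¬ MatEquiv (ZMod 2) V W := by
  have hcol : ∀ {s t}, s ≤ 2 → t ≤ 2 →
      Module.finrank (ZMod 2) (columnLines (Rst (ZMod 2) n p s t)) = s :=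
    fun hs ht => finrank_columnLines_Rst (hs.trans hn.le) (ht.trans_lt hp)
  have hR : n * 2 ≤ Module.finrank (ZMod 2) (Rst (ZMod 2) n p 0 2) := mul_le_finrank_Rst hp.le
  refine List.Pairwise.imp (fun h => not_matEquiv_of_invariants_ne (by omega) h) ?_
  simp only [maxList, List.pairwise_cons, List.forall_mem_cons, List.not_mem_nil,
    IsEmpty.forall_iff, implies_true, List.Pairwise.nil, and_true, finrank_embed, finrank_J3,
    finrank_Mata3, finrank_V3, finrank_columnLines_embed columnLines_J3,
    finrank_columnLines_embed columnLines_Mata3, finrank_columnLines_embed columnLines_V3,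
    hcol le_rfl zero_le_two, hcol zero_le_two le_rfl, hcol one_le_two one_le_two]
  omega

end CornerInvariants

theorem classification_of_maximal_upper_rank_two_spaces {n p : ℕ} (hn : 2 < n) (hp : 2 < p) :
    (∀ S ∈ maxList n p hn hp, IsMaxUrk2 S) ∧
    (maxList n p hn hp).Pairwise (fun S T => ¬ MatEquiv (ZMod 2) S T) ∧
    ∀ V : Submodule (ZMod 2) (Matrix (Fin n) (Fin p) (ZMod 2)),
      IsMaxUrk2 V → ∃ S ∈ maxList n p hn hp, MatEquiv (ZMod 2) V S := by
  refine ⟨fun S => isMaxUrk2_of_mem_maxList, pairwise_not_matEquiv_maxList, fun V hV => ?_⟩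
  obtain ⟨hle, M, hM, hM₂⟩ := urk_eq_iff.1 hV.1
  obtain ⟨S, hS, hfits⟩ := exists_mem_maxList_fits hn hp hle hM hM₂
  exact ⟨S, hS, matEquiv_of_fits hV (isMaxUrk2_of_mem_maxList hS).1 hfits⟩
end

section
/- Let V be a primitive linear subspace of J3(F2) of dimension 2. Then V is equivalent to the space of all diagonal 3×3 matrices over F2 of the form diag(a, a+b, b) with a, b ∈ F2. -/
/-!
Every matrix of `J3` is upper triangular with a diagonal in the plane `x + y + z = 0` of `F2³`.
Since `V` is semi-primitive, none of the three diagonal coordinates vanishes identically on `V`: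
the first and the last because `V` is reduced, the middle one because otherwise deleting the last
column would lower the upper rank. A proper subspace of that plane lies in a coordinate hyperplane,
so every vector of the plane is the diagonal of some matrix of `V`.

In particular `V` contains, for each `i`, a matrix `X i` whose diagonal vanishes exactly at `i`.
Take a vector of the left kernel of `X i` as `i`-th row of `P`, and a vector of its right kernel as
`i`-th column of `Q`. For `i ≠ j`, the plane `V` is spanned by `X i`, which `P` kills on the left in
row `i`, and `X j`, which `Q` kills on the right in column `j`, so `P * M * Q` is diagonal for all
`M ∈ V`. Triangularity makes it possible to choose `P` and `Q` unitriangular, so that `P * M * Q`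
has the same diagonal as `M`, and these diagonals fill the plane.
-/

open Matrix

/-- The space of diagonal matrices `diag (a, a + b, b)` with `a, b ∈ F2`. -/
def DiagSpace : Submodule (ZMod 2) (Matrix (Fin 3) (Fin 3) (ZMod 2)) where
  carrier := {M | ∃ a b : ZMod 2, M = !![a, 0, 0; 0, a + b, 0; 0, 0, b]}
  add_mem' := by
    rintro M N ⟨a, b, rfl⟩ ⟨a', b', rfl⟩
    exact ⟨a + a', b + b', by revert a b a' b'; decide⟩
  zero_mem' := ⟨0, 0, by decide⟩
  smul_mem' := by
    rintro k M ⟨a, b, rfl⟩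
    exact ⟨k * a, k * b, by revert k a b; decide⟩

section UpperTriangular

variable {m R : Type*} [Fintype m] [LinearOrder m]

lemma diag_mul_of_isUpperTriangular [NonUnitalNonAssocSemiring R] {M N : Matrix m m R}
    (hM : M.IsUpperTriangular) (hN : N.IsUpperTriangular) :
    (M * N).diag = M.diag * N.diag := by
  ext i
  rw [Matrix.diag_apply, Matrix.mul_apply, Fintype.sum_eq_single i]
  · rfl
  · intro k hk
    rcases hk.lt_or_gt with hki | hik
    · rw [hM hki, zero_mul]
    · rw [hN hik, mul_zero]

lemma card_le_rank_of_isUpperTriangular [CommRing R] [IsDomain R] {M : Matrix m m R}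
    (hM : M.IsUpperTriangular) {s : Finset m} (hs : ∀ i ∈ s, M i i ≠ 0) : s.card ≤ M.rank := by
  let N : Matrix s s R := M.submatrix (↑) (↑)
  have hN : N.IsUpperTriangular := fun i j hij => hM hij
  have hdet : N.det ≠ 0 := by
    rw [Matrix.det_of_isUpperTriangular hN]
    exact Finset.prod_ne_zero_iff.2 fun i _ => hs i i.2
  calc s.card = N.rank := by rw [Matrix.rank_of_det_ne_zero hdet, Fintype.card_coe]
    _ ≤ M.rank := M.rank_submatrix_le _ _

/-- Upper triangular matrices all of whose diagonal entries are `1`. Multiplying by them on either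
side preserves the diagonal of an upper triangular matrix. -/
def IsUpperUnitriangular [Zero R] [One R] (M : Matrix m m R) : Prop :=
  M.IsUpperTriangular ∧ ∀ i, M i i = 1

lemma IsUpperUnitriangular.isUnit [CommRing R] {M : Matrix m m R}
    (hM : IsUpperUnitriangular M) : IsUnit M := by
  rw [Matrix.isUnit_iff_isUnit_det, Matrix.det_of_isUpperTriangular hM.1,
    Fintype.prod_eq_one _ hM.2]
  exact isUnit_one

lemma IsUpperUnitriangular.diag_mul_mul [Semiring R] {P M Q : Matrix m m R}
    (hP : IsUpperUnitriangular P) (hM : M.IsUpperTriangular) (hQ : IsUpperUnitriangular Q) :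
    (P * M * Q).diag = M.diag := by
  have hP_diag : P.diag = 1 := funext hP.2
  have hQ_diag : Q.diag = 1 := funext hQ.2
  rw [diag_mul_of_isUpperTriangular (hP.1.mul hM) hQ.1, diag_mul_of_isUpperTriangular hP.1 hM,
    hP_diag, hQ_diag, one_mul, mul_one]

end UpperTriangular

lemma span_pair_eq_of_finrank_eq_two {K E : Type*} [DivisionRing K] [AddCommGroup E] [Module K E]
    {V : Submodule K E} (hV : Module.finrank K V = 2) {x y : E} (hx : x ∈ V) (hy : y ∈ V)
    (hxy : LinearIndependent K ![x, y]) : Submodule.span K {x, y} = V := by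
  have : FiniteDimensional K V := Module.finite_of_finrank_pos (by omega)
  refine Submodule.eq_of_le_of_finrank_eq (Submodule.span_le.2 (Set.pair_subset hx hy)) ?_
  rw [hV, ← Matrix.range_cons_cons_empty, finrank_span_eq_card hxy, Fintype.card_fin]

lemma linearIndependent_pair_of_diag_eq_zero_iff {m R : Type*} [Ring R]
    [NoZeroDivisors R] {X : m → Matrix m m R} (hX_diag : ∀ i j, X i j j = 0 ↔ i = j) {i j : m}
    (hij : i ≠ j) : LinearIndependent R ![X i, X j] := by
  rw [LinearIndependent.pair_iff]
  intro a b hab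
  have hii : a * X i i i + b * X j i i = 0 := congrFun₂ hab i i
  have hjj : a * X i j j + b * X j j j = 0 := congrFun₂ hab j j
  rw [(hX_diag i i).2 rfl, mul_zero, zero_add] at hii
  rw [(hX_diag j j).2 rfl, mul_zero, add_zero] at hjj
  exact ⟨(mul_eq_zero.1 hjj).resolve_right ((hX_diag i j).not.2 hij),
    (mul_eq_zero.1 hii).resolve_right ((hX_diag j i).not.2 hij.symm)⟩

section Diagonalization

variable {m K : Type*} [Fintype m] [LinearOrder m] [Field K]

lemma exists_mulVec_apply_eq_zero_of_lt {M : Matrix m m K} (hM : M.IsUpperTriangular)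
    {i : m} (hne : ∀ j < i, M j j ≠ 0) :
    ∃ u : m → K, (∀ j < i, (M *ᵥ u) j = 0) ∧ u i = 1 ∧ ∀ j, i < j → u j = 0 := by
  -- Replacing the rows of `M` from the `i`-th on by those of the identity turns all the conditions
  -- on `u` into a single invertible linear system.
  let N : Matrix m m K := Matrix.of fun j => if j < i then M j else Pi.single j 1
  have hN_row {j : m} (hj : j < i) : N j = M j := if_pos hj
  have hN_single {j : m} (hj : i ≤ j) : N j = Pi.single j 1 := if_neg hj.not_gt
  have hN : N.IsUpperTriangular := by
    intro j k (hkj : k < j)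
    rcases lt_or_ge j i with hj | hj
    · rw [hN_row hj, hM hkj]
    · rw [hN_single hj, Pi.single_eq_of_ne hkj.ne]
  have hN_det : IsUnit N.det := by
    rw [Matrix.det_of_isUpperTriangular hN, isUnit_iff_ne_zero, Finset.prod_ne_zero_iff]
    intro j _
    rcases lt_or_ge j i with hj | hj
    · rw [hN_row hj]
      exact hne j hj
    · rw [hN_single hj, Pi.single_eq_same]
      exact one_ne_zero
  obtain ⟨u, hu⟩ : ∃ u, N *ᵥ u = Pi.single i 1 :=
    ⟨N⁻¹ *ᵥ Pi.single i 1, by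
      rw [Matrix.mulVec_mulVec, Matrix.mul_nonsing_inv _ hN_det, Matrix.one_mulVec]⟩
  have hu_ge {j : m} (hj : i ≤ j) : u j = (Pi.single i 1 : m → K) j := by
    rw [← hu, ← single_one_dotProduct j u, ← hN_single hj]
    rfl
  refine ⟨u, fun j hj => ?_, by rw [hu_ge le_rfl, Pi.single_eq_same], fun j hj => ?_⟩
  · calc (M *ᵥ u) j = (N *ᵥ u) j := congrArg (· ⬝ᵥ u) (hN_row hj).symm
      _ = 0 := by rw [hu, Pi.single_eq_of_ne hj.ne]
  · rw [hu_ge hj.le, Pi.single_eq_of_ne hj.ne']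

lemma exists_mulVec_eq_zero_of_isUpperTriangular {M : Matrix m m K} (hM : M.IsUpperTriangular)
    {i : m} (hi : M i i = 0) (hne : ∀ j < i, M j j ≠ 0) :
    ∃ u : m → K, M *ᵥ u = 0 ∧ u i = 1 ∧ ∀ j, i < j → u j = 0 := by
  obtain ⟨u, hu_lt, hu_one, hu_zero⟩ := exists_mulVec_apply_eq_zero_of_lt hM hne
  refine ⟨u, funext fun j => ?_, hu_one, hu_zero⟩
  rcases lt_or_ge j i with hj | hj
  · exact hu_lt j hj
  · refine Finset.sum_eq_zero fun k _ => ?_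
    change M j k * u k = 0
    rcases lt_trichotomy i k with hik | rfl | hki
    · rw [hu_zero k hik, mul_zero]
    · rcases hj.eq_or_lt with rfl | hij
      · rw [hi, zero_mul]
      · rw [hM hij, zero_mul]
    · rw [hM (hki.trans_le hj), zero_mul]

lemma exists_vecMul_eq_zero_of_isUpperTriangular {M : Matrix m m K} (hM : M.IsUpperTriangular)
    {i : m} (hi : M i i = 0) (hne : ∀ j, i < j → M j j ≠ 0) :
    ∃ w : m → K, w ᵥ* M = 0 ∧ w i = 1 ∧ ∀ j < i, w j = 0 := by
  -- Indexed by the order dual of `m`, the transpose of `M` is upper triangular.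
  obtain ⟨w, hw, hw_one, hw_zero⟩ :=
    exists_mulVec_eq_zero_of_isUpperTriangular (m := mᵒᵈ) (M := Mᵀ) (fun _ _ hij => hM hij) hi hne
  exact ⟨w, (Matrix.mulVec_transpose M w).symm.trans hw, hw_one, hw_zero⟩

lemma exists_isUpperUnitriangular_mulVec_col_eq_zero {X : m → Matrix m m K}
    (hX : ∀ i, (X i).IsUpperTriangular) (hX_diag : ∀ i j, X i j j = 0 ↔ i = j) :
    ∃ Q : Matrix m m K, IsUpperUnitriangular Q ∧ ∀ i, X i *ᵥ Q.col i = 0 := by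
  choose u hu hu_one hu_zero using fun i =>
    exists_mulVec_eq_zero_of_isUpperTriangular (hX i) ((hX_diag i i).2 rfl)
      fun j hj => (hX_diag i j).not.2 hj.ne'
  exact ⟨Matrix.of fun i j => u j i, ⟨fun i j hij => hu_zero j i hij, hu_one⟩, hu⟩

lemma exists_isUpperUnitriangular_row_vecMul_eq_zero {X : m → Matrix m m K}
    (hX : ∀ i, (X i).IsUpperTriangular) (hX_diag : ∀ i j, X i j j = 0 ↔ i = j) :
    ∃ P : Matrix m m K, IsUpperUnitriangular P ∧ ∀ i, P.row i ᵥ* X i = 0 := by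
  choose w hw hw_one hw_zero using fun i =>
    exists_vecMul_eq_zero_of_isUpperTriangular (hX i) ((hX_diag i i).2 rfl)
      fun j hj => (hX_diag i j).not.2 hj.ne
  exact ⟨Matrix.of w, ⟨fun i j hij => hw_zero i j hij, hw_one⟩, hw⟩

theorem exists_mul_mul_eq_diagonal_diag {V : Submodule K (Matrix m m K)}
    (hV : ∀ M ∈ V, M.IsUpperTriangular) (hdim : Module.finrank K V = 2) {X : m → Matrix m m K}
    (hXV : ∀ i, X i ∈ V) (hX_diag : ∀ i j, X i j j = 0 ↔ i = j) :
    ∃ P Q : Matrix m m K, IsUnit P ∧ IsUnit Q ∧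
      ∀ M ∈ V, P * M * Q = Matrix.diagonal M.diag := by
  obtain ⟨P, hP, hPX⟩ :=
    exists_isUpperUnitriangular_row_vecMul_eq_zero (fun i => hV _ (hXV i)) hX_diag
  obtain ⟨Q, hQ, hXQ⟩ :=
    exists_isUpperUnitriangular_mulVec_col_eq_zero (fun i => hV _ (hXV i)) hX_diag
  refine ⟨P, Q, hP.isUnit, hQ.isUnit, fun M hM => ?_⟩
  ext i j
  rcases eq_or_ne i j with rfl | hij
  · rw [Matrix.diagonal_apply_eq, ← hP.diag_mul_mul (hV M hM) hQ, Matrix.diag_apply]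
  · rw [← span_pair_eq_of_finrank_eq_two hdim (hXV i) (hXV j)
      (linearIndependent_pair_of_diag_eq_zero_iff hX_diag hij)] at hM
    obtain ⟨a, b, rfl⟩ := Submodule.mem_span_pair.1 hM
    rw [Matrix.diagonal_apply_ne _ hij]
    calc (P * (a • X i + b • X j) * Q) i j
        = a • ((P.row i ᵥ* X i) ⬝ᵥ Q.col j) + b • (P.row i ⬝ᵥ (X j *ᵥ Q.col j)) := by
          rw [← Matrix.dotProduct_mulVec, ← dotProduct_smul, ← dotProduct_smul,
            ← dotProduct_add, ← Matrix.smul_mulVec, ← Matrix.smul_mulVec, ← Matrix.add_mulVec]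
          exact Matrix.mul_mul_apply _ _ _ _ _
      _ = 0 := by
          rw [hPX, hXQ, zero_dotProduct, dotProduct_zero, smul_zero, smul_zero, add_zero]

end Diagonalization

section Primitivity

variable {K : Type*} [Field K] {n p : ℕ} {V : Submodule K (Matrix (Fin n) (Fin p) K)}

lemma MatEquiv.refl (V : Submodule K (Matrix (Fin n) (Fin p) K)) : MatEquiv K V V :=
  ⟨1, 1, isUnit_one, isUnit_one, by simp only [Matrix.one_mul, Matrix.mul_one, Set.image_id']⟩

lemma rank_le_urk {M : Matrix (Fin n) (Fin p) K} (hM : M ∈ V) : M.rank ≤ urk V := by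
  refine le_csSup ⟨p, ?_⟩ ⟨M, hM, rfl⟩
  rintro _ ⟨N, -, rfl⟩
  exact N.rank_le_width

lemma SemiPrimitive.exists_urk_le_rank_dropCol (hV : SemiPrimitive K V) :
    ∃ M ∈ V, urk V ≤ (dropCol M).rank := by
  by_contra! h
  exact hV.2 ⟨V, MatEquiv.refl V, fun M hM => Nat.le_sub_one_of_lt (h M hM)⟩

lemma Reduced.exists_col_ne_zero (hV : Reduced K V) (j : Fin p) : ∃ M ∈ V, M.col j ≠ 0 := by
  by_contra! h
  have hsingle : (Pi.single j 1 : Fin p → K) = 0 :=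
    hV.1 _ fun M hM => by rw [Matrix.mulVec_single_one, h M hM]
  exact one_ne_zero (Pi.single_eq_zero_iff.1 hsingle)

lemma Reduced.exists_row_ne_zero (hV : Reduced K V) (i : Fin n) : ∃ M ∈ V, M.row i ≠ 0 := by
  by_contra! h
  have hle : Submodule.span K {y : Fin n → K | ∃ M ∈ V, ∃ x : Fin p → K, M.mulVec x = y} ≤
      LinearMap.ker (LinearMap.proj i : (Fin n → K) →ₗ[K] K) := by
    rw [Submodule.span_le]
    rintro _ ⟨M, hM, x, rfl⟩
    change M.row i ⬝ᵥ x = 0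
    rw [h M hM, zero_dotProduct]
  have hone : (1 : Fin n → K) i = 0 := hle (hV.2 ▸ Submodule.mem_top)
  exact one_ne_zero hone

end Primitivity

section ReducedUpperTriangular

variable {K : Type*} [Field K] {n : ℕ} {V : Submodule K (Matrix (Fin (n + 1)) (Fin (n + 1)) K)}

lemma Reduced.exists_apply_zero_zero_ne_zero (hV : Reduced K V)
    (htri : ∀ M ∈ V, M.IsUpperTriangular) : ∃ M ∈ V, M 0 0 ≠ 0 := by
  obtain ⟨M, hM, hcol⟩ := hV.exists_col_ne_zero 0
  refine ⟨M, hM, fun h => hcol (funext fun i => ?_)⟩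
  rcases (Fin.zero_le i).eq_or_lt with rfl | hi
  · exact h
  · exact htri M hM hi

lemma Reduced.exists_apply_last_last_ne_zero (hV : Reduced K V)
    (htri : ∀ M ∈ V, M.IsUpperTriangular) : ∃ M ∈ V, M (Fin.last n) (Fin.last n) ≠ 0 := by
  obtain ⟨M, hM, hrow⟩ := hV.exists_row_ne_zero (Fin.last n)
  refine ⟨M, hM, fun h => hrow (funext fun j => ?_)⟩
  rcases (Fin.le_last j).eq_or_lt with rfl | hj
  · exact h
  · exact htri M hM hj

end ReducedUpperTriangular

lemma rank_dropCol_le_one {K : Type*} [Field K] {M : Matrix (Fin 3) (Fin 3) K}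
    (hM : M.IsUpperTriangular) (h : M 1 1 = 0) : (dropCol M).rank ≤ 1 := by
  have hrow_one (j : Fin 2) : dropCol M 1 j = 0 := by
    fin_cases j
    exacts [hM (by decide : (0 : Fin 3) < 1), h]
  have hrow_two (j : Fin 2) : dropCol M 2 j = 0 := by
    fin_cases j
    exacts [hM (by decide : (0 : Fin 3) < 2), hM (by decide : (1 : Fin 3) < 2)]
  refine (dropCol M).rank_le_card_of_support_subset {0} (Function.support_subset_iff'.2 ?_)
  intro i hi
  fin_cases i
  exacts [absurd (Finset.mem_singleton_self 0) hi, funext hrow_one, funext hrow_two]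

lemma exists_eq_const_add_single (c : Fin 3 → ZMod 2) :
    ∃ (a t : ZMod 2) (i : Fin 3), c = Function.const _ a + Pi.single i t := by
  -- By pigeonhole two of the three values of `c` agree.
  revert c
  decide

lemma exists_apply_eq_mul_apply_of_sum_eq_zero (f : (Fin 3 → ZMod 2) →ₗ[ZMod 2] ZMod 2) :
    ∃ (t : ZMod 2) (i : Fin 3), ∀ w : Fin 3 → ZMod 2, ∑ j, w j = 0 → f w = t * w i := by
  obtain ⟨a, t, i, hf⟩ := exists_eq_const_add_single fun j => f fun k => if j = k then 1 else 0
  refine ⟨t, i, fun w hw => ?_⟩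
  calc f w = w ⬝ᵥ fun j => f fun k => if j = k then 1 else 0 := f.pi_apply_eq_sum_univ w
    _ = (∑ j, w j) * a + w i * t := by
      rw [hf, dotProduct_add, dotProduct_single, Finset.sum_mul]
      rfl
    _ = t * w i := by rw [hw, zero_mul, zero_add, mul_comm]

lemma mem_of_sum_eq_zero_of_exists_apply_ne_zero {W : Submodule (ZMod 2) (Fin 3 → ZMod 2)}
    (hsum : ∀ w ∈ W, ∑ i, w i = 0) (hne : ∀ i, ∃ w ∈ W, w i ≠ 0) {d : Fin 3 → ZMod 2}
    (hd : ∑ i, d i = 0) : d ∈ W := by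
  by_contra hdW
  obtain ⟨f, hfd, hfW⟩ := Submodule.exists_le_ker_of_notMem hdW
  obtain ⟨t, i, hf⟩ := exists_apply_eq_mul_apply_of_sum_eq_zero f
  obtain ⟨w, hw, hwi⟩ := hne i
  have htw : t * w i = 0 := (hf w (hsum w hw)).symm.trans (hfW hw)
  have ht : t = 0 := (mul_eq_zero.1 htw).resolve_right hwi
  exact hfd (by rw [hf d hd, ht, zero_mul])

lemma isUpperTriangular_of_mem_J3 {M : Matrix (Fin 3) (Fin 3) (ZMod 2)} (hM : M ∈ J3) :
    M.IsUpperTriangular :=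
  fun i j hij => hM.2 i j hij

namespace SemiPrimitive

variable {V : Submodule (ZMod 2) (Matrix (Fin 3) (Fin 3) (ZMod 2))}

lemma exists_apply_one_one_ne_zero (hV : SemiPrimitive (ZMod 2) V) (hJ : V ≤ J3) :
    ∃ M ∈ V, M 1 1 ≠ 0 := by
  by_contra! h
  have htri : ∀ M ∈ V, M.IsUpperTriangular := fun M hM => isUpperTriangular_of_mem_J3 (hJ hM)
  obtain ⟨A, hA, hA_zero⟩ := hV.1.exists_apply_zero_zero_ne_zero htri
  have hA_two : A 2 2 ≠ 0 := by
    intro hA_two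
    have htrace := (hJ hA).1
    rw [Matrix.trace_fin_three, h A hA, hA_two, add_zero, add_zero] at htrace
    exact hA_zero htrace
  have htwo_le : 2 ≤ A.rank := card_le_rank_of_isUpperTriangular (s := {0, 2}) (htri A hA)
    (by simpa using And.intro hA_zero hA_two)
  obtain ⟨M, hM, hM_rank⟩ := hV.exists_urk_le_rank_dropCol
  have hle_one := rank_dropCol_le_one (htri M hM) (h M hM)
  have hA_urk := rank_le_urk hA
  omega

lemma exists_apply_self_ne_zero (hV : SemiPrimitive (ZMod 2) V) (hJ : V ≤ J3) (i : Fin 3) :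
    ∃ M ∈ V, M i i ≠ 0 := by
  have htri : ∀ M ∈ V, M.IsUpperTriangular := fun M hM => isUpperTriangular_of_mem_J3 (hJ hM)
  fin_cases i
  · exact hV.1.exists_apply_zero_zero_ne_zero htri
  · exact hV.exists_apply_one_one_ne_zero hJ
  · exact hV.1.exists_apply_last_last_ne_zero htri

lemma exists_diag_eq (hV : SemiPrimitive (ZMod 2) V) (hJ : V ≤ J3)
    {d : Fin 3 → ZMod 2} (hd : ∑ i, d i = 0) : ∃ M ∈ V, M.diag = d := by
  let W := V.map (Matrix.diagLinearMap (Fin 3) (ZMod 2) (ZMod 2))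
  have hsum : ∀ w ∈ W, ∑ i, w i = 0 := by
    rintro _ ⟨M, hM, rfl⟩
    exact (hJ hM).1
  have hne (i : Fin 3) : ∃ w ∈ W, w i ≠ 0 := by
    obtain ⟨M, hM, hMi⟩ := hV.exists_apply_self_ne_zero hJ i
    exact ⟨M.diag, ⟨M, hM, rfl⟩, hMi⟩
  exact mem_of_sum_eq_zero_of_exists_apply_ne_zero hsum hne hd

end SemiPrimitive

lemma mem_DiagSpace_iff {N : Matrix (Fin 3) (Fin 3) (ZMod 2)} :
    N ∈ DiagSpace ↔ ∃ d : Fin 3 → ZMod 2, ∑ i, d i = 0 ∧ N = Matrix.diagonal d := by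
  constructor
  · rintro ⟨a, b, rfl⟩
    exact ⟨![a, a + b, b], by revert a b; decide, by revert a b; decide⟩
  · rintro ⟨d, hd, rfl⟩
    exact ⟨d 0, d 2, by revert d; decide⟩

theorem primitive_two_dimensional_subspace_of_J3_general
    (V : Submodule (ZMod 2) (Matrix (Fin 3) (Fin 3) (ZMod 2)))
    (hV : V ≤ J3) (hsemi : SemiPrimitive (ZMod 2) V)
    (hdim : Module.finrank (ZMod 2) V = 2) :
    MatEquiv (ZMod 2) V DiagSpace := by
  have hX (i : Fin 3) : ∃ M ∈ V, M.diag = fun j => if i = j then 0 else 1 :=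
    hsemi.exists_diag_eq hV (by revert i; decide)
  choose X hXV hX_diag using hX
  have hX_zero (i j : Fin 3) : X i j j = 0 ↔ i = j := by
    have hX_apply : X i j j = if i = j then 0 else 1 := congrFun (hX_diag i) j
    simp [hX_apply]
  obtain ⟨P, Q, hP, hQ, hPQ⟩ := exists_mul_mul_eq_diagonal_diag
    (fun M hM => isUpperTriangular_of_mem_J3 (hV hM)) hdim hXV hX_zero
  refine ⟨P, Q, hP, hQ, Set.ext fun N => mem_DiagSpace_iff.trans ⟨?_, ?_⟩⟩
  · rintro ⟨d, hd, rfl⟩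
    obtain ⟨M, hM, rfl⟩ := hsemi.exists_diag_eq hV hd
    exact ⟨M, hM, hPQ M hM⟩
  · rintro ⟨M, hM, rfl⟩
    exact ⟨M.diag, (hV hM).1, hPQ M hM⟩

theorem primitive_two_dimensional_subspace_of_J3
    (V : Submodule (ZMod 2) (Matrix (Fin 3) (Fin 3) (ZMod 2)))
    (hV : V ≤ J3) (hprim : Primitive (ZMod 2) V)
    (hdim : Module.finrank (ZMod 2) V = 2) :
    MatEquiv (ZMod 2) V DiagSpace :=
  primitive_two_dimensional_subspace_of_J3_general V hV hprim.1 hdim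
end
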